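/- arXiv:2203.11982 — 3 statements merged into one kernel-verified Lean document; each statement's English description precedes it below -/
import Mathlib

section
/- Let Λ be a lattice in ℂ with complex multiplication by R such that g₂(Λ) and g₃(Λ) are algebraic over ℚ, and let 𝔞 be a nonzero fractional ideal of 𝓞_K (so that g₂(𝔞·Λ) and g₃(𝔞·Λ) are also algebraic over ℚ, which we assume). Let M be a lattice with g₂(M) = σ(g₂(Λ)) and g₃(M) = σ(g₃(Λ)), and let N be a lattice with g₂(N) = σ(g₂(𝔞·Λ)) and g₃(N) = σ(g₃(𝔞·Λ)). Then N equals the additive subgroup of ℂ generated by {σ(τ(a))·m : a ∈ 𝔞, m ∈ M}, i.e. N = σ(𝔞)·M. -/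
open NumberField

/-- The Eisenstein series `g₂` of an additive subgroup of `ℂ`. -/
noncomputable def g₂ (Λ : AddSubgroup ℂ) : ℂ :=
  60 * ∑' w : {w : ℂ // w ∈ Λ ∧ w ≠ 0}, ((w : ℂ) ^ 4)⁻¹

/-- The Eisenstein series `g₃` of an additive subgroup of `ℂ`. -/
noncomputable def g₃ (Λ : AddSubgroup ℂ) : ℂ :=
  140 * ∑' w : {w : ℂ // w ∈ Λ ∧ w ≠ 0}, ((w : ℂ) ^ 6)⁻¹

/-- For a fractional ideal `𝔞` of `𝓞 K` and a subset `S ⊆ ℂ`, the additive subgroup `𝔞·S`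
of `ℂ` generated by the products `τ(a)·s` for `a ∈ 𝔞`, `s ∈ S`. -/
noncomputable def idealMul {K : Type*} [Field K] [NumberField K] (τ : K →+* ℂ)
    (𝔞 : FractionalIdeal (nonZeroDivisors (𝓞 K)) K) (S : Set ℂ) : AddSubgroup ℂ :=
  AddSubgroup.closure {x : ℂ | ∃ a ∈ 𝔞, ∃ s ∈ S, x = τ a * s}

/-!
For lattices, `Λ ≤ Λ'` holds precisely when `℘[Λ']` is a rational function of `℘[Λ]`. Such a
rational relation is an identity between the Laurent expansions of the two functions at `0`, whose
coefficients are polynomials in `g₂` and `g₃` with rational coefficients. If the invariants lie in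
a field `k`, the relation is a linear system over `k` for the coefficients of numerator and
denominator, so it has a solution over `k`, and another embedding of `k` in `ℂ` turns it into a
relation for the conjugate lattices. Hence inclusions, and after rescaling inclusions `x Λ ≤ Λ'`
with `x ∈ k`, are preserved by conjugation. Applying this to `a Λ ≤ 𝔞Λ` for `a ∈ 𝔞` and to
`b 𝔞Λ ≤ Λ` for `b ∈ 𝔞⁻¹` gives `σ(𝔞) M ≤ N` and `σ(𝔞)⁻¹ N ≤ M`.
-/

section FormalWeierstrassEquation

open PowerSeries

variable {F : Type*} [Field F]

/-- The coefficients of the formal solution `A = X² ℘` of the Weierstrass equation with invariants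
`a = g₂` and `b = g₃`, by the recursion that the differential equation `℘'' = 6 ℘² - a / 2` imposes.
At `n = 6` the differential equation is void and the coefficient is fixed by `b`. -/
noncomputable def weierstrassCoeff (a b : F) (n : ℕ) : F :=
  if n = 0 then 1 else if n = 6 then b / 28 else
    (6 * ∑ i : Finset.Ico 1 n, weierstrassCoeff a b i * weierstrassCoeff a b (n - i) -
      if n = 4 then a / 2 else 0) / ((n - 6) * (n + 1))
termination_by n
decreasing_by all_goals have := Finset.mem_Ico.1 i.2; lia

lemma map_weierstrassCoeff {k F : Type*} [Field k] [Field F] (ι : k →+* F) (a b : k) (n : ℕ) :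
    ι (weierstrassCoeff a b n) = weierstrassCoeff (ι a) (ι b) n := by
  induction n using Nat.strong_induction_on with
  | _ n ih =>
    have ih_mul (i : Finset.Ico 1 n) :
        ι (weierstrassCoeff a b i * weierstrassCoeff a b (n - i)) =
          weierstrassCoeff (ι a) (ι b) i * weierstrassCoeff (ι a) (ι b) (n - i) := by
      have := Finset.mem_Ico.1 i.2
      rw [map_mul, ih _ (by lia), ih _ (by lia)]
    rw [weierstrassCoeff, weierstrassCoeff]
    split_ifs <;> simp [ih_mul, map_ofNat]

lemma derivative_ofNat (n : ℕ) [n.AtLeastTwo] : d⁄dX F (ofNat(n) : F⟦X⟧) = 0 :=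
  (d⁄dX F).map_natCast n

lemma second_order_of_weierstrass_equation [CharZero F] {A U : F⟦X⟧} {a b : F}
    (hA : constantCoeff A = 1) (hU : U = X * d⁄dX F A - 2 * A)
    (h : U ^ 2 = 4 * A ^ 3 - C a * X ^ 4 * A - C b * X ^ 6) :
    X * d⁄dX F U - 3 * U = 6 * A ^ 2 - C (a / 2) * X ^ 4 := by
  have hU₀ : 2 * U ≠ 0 := fun h₀ ↦ by
    simpa [hU, hA, map_ofNat] using congrArg constantCoeff h₀
  have hCa : (C a : F⟦X⟧) = 2 * C (a / 2) := by
    rw [← map_ofNat (C (R := F)) 2, ← map_mul, mul_div_cancel₀ _ two_ne_zero]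
  have hdiff := congrArg (d⁄dX F) h
  simp only [Derivation.leibniz_pow, map_sub, Derivation.leibniz, derivative_C, derivative_X,
    derivative_ofNat, smul_eq_mul, nsmul_eq_mul, Nat.cast_ofNat] at hdiff
  norm_num at hdiff
  refine mul_left_cancel₀ hU₀ ?_
  rw [hCa] at h hdiff
  linear_combination X * hdiff - 6 * h - (12 * A ^ 2 - 2 * C (a / 2) * X ^ 4) * hU

lemma coeff_X_mul_derivative (A : F⟦X⟧) (n : ℕ) : coeff n (X * d⁄dX F A) = n * coeff n A := by
  cases n with
  | zero => simp
  | succ n => simp [coeff_succ_X_mul, coeff_derivative, mul_comm]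

lemma coeff_recursion_of_second_order {A U : F⟦X⟧} {a : F} (hA : constantCoeff A = 1)
    (hU : U = X * d⁄dX F A - 2 * A) (h : X * d⁄dX F U - 3 * U = 6 * A ^ 2 - C (a / 2) * X ^ 4)
    {n : ℕ} (hn : n ≠ 0) :
    coeff n A * ((n - 6) * (n + 1)) =
      6 * ∑ i ∈ Finset.Ico 1 n, coeff i A * coeff (n - i) A - if n = 4 then a / 2 else 0 := by
  have hcoeff_ofNat (m : ℕ) [m.AtLeastTwo] (B : F⟦X⟧) :
      coeff n (ofNat(m) * B) = ofNat(m) * coeff n B := by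
    rw [← map_ofNat (C (R := F)), coeff_C_mul]
  have hcoeffU : coeff n U = (n - 2) * coeff n A := by
    rw [hU, map_sub, coeff_X_mul_derivative, hcoeff_ofNat, sub_mul]
  have hsq : coeff n (A ^ 2) =
      2 * coeff n A + ∑ i ∈ Finset.Ico 1 n, coeff i A * coeff (n - i) A := by
    rw [sq, coeff_mul, Finset.Nat.sum_antidiagonal_eq_sum_range_succ
      (fun i j ↦ coeff i A * coeff j A), Finset.sum_range_succ,
      Finset.sum_range_eq_add_Ico _ (Nat.pos_of_ne_zero hn)]
    simp only [coeff_zero_eq_constantCoeff, hA, Nat.sub_self, Nat.sub_zero]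
    ring
  have hcoeff := congrArg (coeff n) h
  simp only [map_sub, coeff_X_mul_derivative, hcoeff_ofNat, hcoeffU, hsq, coeff_C_mul, coeff_X_pow,
    mul_ite, mul_one, mul_zero] at hcoeff
  linear_combination hcoeff

lemma coeff_eq_weierstrassCoeff [CharZero F] {A U : F⟦X⟧} {a b : F} (hA : constantCoeff A = 1)
    (hA₆ : coeff 6 A = b / 28) (hU : U = X * d⁄dX F A - 2 * A)
    (h : U ^ 2 = 4 * A ^ 3 - C a * X ^ 4 * A - C b * X ^ 6) (n : ℕ) :
    coeff n A = weierstrassCoeff a b n := by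
  have hsecond := second_order_of_weierstrass_equation hA hU h
  induction n using Nat.strong_induction_on with
  | _ n ih =>
    rw [weierstrassCoeff]
    rcases eq_or_ne n 0 with rfl | h₀
    · simp [hA]
    rcases eq_or_ne n 6 with rfl | h₆
    · simp [hA₆]
    have hden : ((n : F) - 6) * (n + 1) ≠ 0 :=
      mul_ne_zero (sub_ne_zero.2 (by exact_mod_cast h₆)) n.cast_add_one_ne_zero
    rw [if_neg h₀, if_neg h₆, eq_div_iff hden, coeff_recursion_of_second_order hA hU hsecond h₀,
      ← Finset.sum_coe_sort (Finset.Ico 1 n)]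
    congr! 3 with i
    have := Finset.mem_Ico.1 i.2
    rw [ih i (by lia), ih (n - i) (by lia)]

end FormalWeierstrassEquation

section TaylorSeries

open PowerSeries Filter Topology

/-- Near `0`, but not necessarily at `0` itself, the function `f` is the sum of the power series
`p`. Leaving out the point `0` allows for functions such as `z ↦ z ^ 2 * ℘ z`, whose value at `0` is
junk. -/
def HasTaylorSeries (f : ℂ → ℂ) (p : ℂ⟦X⟧) : Prop :=
  ∀ᶠ z in 𝓝[≠] (0 : ℂ), HasSum (fun n ↦ coeff n p * z ^ n) (f z)

namespace HasTaylorSeries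

variable {f g : ℂ → ℂ} {p q : ℂ⟦X⟧}

lemma congr (hf : HasTaylorSeries f p) (h : f =ᶠ[𝓝[≠] 0] g) : HasTaylorSeries g p := by
  filter_upwards [hf, h] with z hz hfg
  rwa [← hfg]

lemma add (hf : HasTaylorSeries f p) (hg : HasTaylorSeries g q) :
    HasTaylorSeries (fun z ↦ f z + g z) (p + q) := by
  filter_upwards [hf, hg] with z hfz hgz
  simpa [add_mul] using hfz.add hgz

lemma mul (hf : HasTaylorSeries f p) (hg : HasTaylorSeries g q) :
    HasTaylorSeries (fun z ↦ f z * g z) (p * q) := by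
  filter_upwards [hf, hg] with z hfz hgz
  have hcoeff (n : ℕ) : coeff n (p * q) * z ^ n =
      ∑ ij ∈ Finset.HasAntidiagonal.antidiagonal n, (coeff ij.1 p * z ^ ij.1) *
        (coeff ij.2 q * z ^ ij.2) := by
    rw [coeff_mul, Finset.sum_mul]
    refine Finset.sum_congr rfl fun ij hij ↦ ?_
    rw [← Finset.HasAntidiagonal.mem_antidiagonal.1 hij, pow_add]
    ring
  simp only [hcoeff]
  rw [← hfz.tsum_eq, ← hgz.tsum_eq, tsum_mul_tsum_eq_tsum_sum_antidiagonal_of_summable_norm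
    hfz.summable.norm hgz.summable.norm]
  exact (summable_norm_sum_mul_antidiagonal_of_summable_norm
    hfz.summable.norm hgz.summable.norm).of_norm.hasSum

lemma const (c : ℂ) : HasTaylorSeries (fun _ ↦ c) (C c) :=
  .of_forall fun z ↦ by
    simpa using hasSum_single (f := fun n ↦ coeff n (C c) * z ^ n) 0
      fun n hn ↦ by simp [coeff_C, hn]

lemma id : HasTaylorSeries (fun z ↦ z) X :=
  .of_forall fun z ↦ by
    simpa using hasSum_single (f := fun n ↦ coeff n (X : ℂ⟦X⟧) * z ^ n) 1
      fun n hn ↦ by simp [coeff_X, hn]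

lemma pow (hf : HasTaylorSeries f p) (n : ℕ) : HasTaylorSeries (fun z ↦ f z ^ n) (p ^ n) := by
  induction n with
  | zero => simpa using const 1
  | succ n ih => simpa [pow_succ] using ih.mul hf

lemma sum {I : Type*} {f : I → ℂ → ℂ} {p : I → ℂ⟦X⟧} (s : Finset I)
    (h : ∀ i, HasTaylorSeries (f i) (p i)) :
    HasTaylorSeries (fun z ↦ ∑ i ∈ s, f i z) (∑ i ∈ s, p i) := by
  classical
  induction s using Finset.induction_on with
  | empty => simpa using const 0
  | insert i s hi ih => simpa [Finset.sum_insert hi] using (h i).add ih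

lemma hasFPowerSeriesAt (hf : HasTaylorSeries f p) :
    HasFPowerSeriesAt (Function.update f 0 (constantCoeff p))
      (.ofScalars ℂ fun n ↦ coeff n p) 0 := by
  rw [hasFPowerSeriesAt_iff]
  filter_upwards [eventually_nhdsWithin_iff.1 hf] with z hz
  rcases eq_or_ne z 0 with rfl | hz₀
  · simpa using hasSum_single (f := fun n ↦ (0 : ℂ) ^ n * coeff n p) 0 fun n hn ↦ by simp [hn]
  · simpa [hz₀, mul_comm] using hz hz₀

lemma of_hasFPowerSeriesAt {c : ℕ → ℂ} (hf : HasFPowerSeriesAt f (.ofScalars ℂ c) 0) :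
    HasTaylorSeries f (PowerSeries.mk c) := by
  refine Filter.Eventually.filter_mono nhdsWithin_le_nhds ?_
  filter_upwards [hasFPowerSeriesAt_iff.1 hf] with z hz
  simpa [mul_comm] using hz

lemma eq_iff (hf : HasTaylorSeries f p) (hg : HasTaylorSeries g q) :
    p = q ↔ f =ᶠ[𝓝[≠] 0] g := by
  constructor
  · rintro rfl
    filter_upwards [hf, hg] with z hfz hgz using hfz.unique hgz
  · intro h
    have hp := hf.hasFPowerSeriesAt
    have hq := (hg.congr h.symm).hasFPowerSeriesAt
    have hpunctured : Function.update f 0 (constantCoeff p) =ᶠ[𝓝[≠] 0]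
        Function.update f 0 (constantCoeff q) :=
      eventually_nhdsWithin_of_forall fun z (hz : z ≠ 0) ↦ by simp [hz]
    have hpq : Function.update f 0 (constantCoeff p) =ᶠ[𝓝 0]
        Function.update f 0 (constantCoeff q) :=
      (hp.analyticAt.frequently_eq_iff_eventually_eq hq.analyticAt).1 hpunctured.frequently
    ext n
    simpa using congrArg (·.coeff n) ((hp.congr hpq).eq_formalMultilinearSeries hq)

end HasTaylorSeries

end TaylorSeries

section WeierstrassSeries

open PowerSeries Filter Topology PeriodPair

/-- The power series `X² ℘`, where `℘` is the formal Weierstrass function with invariants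
`a = g₂` and `b = g₃`. -/
noncomputable def weierstrassSeries {F : Type*} [Field F] (a b : F) : F⟦X⟧ :=
  PowerSeries.mk (weierstrassCoeff a b)

lemma map_weierstrassSeries {k F : Type*} [Field k] [Field F] (ι : k →+* F) (a b : k) :
    PowerSeries.map ι (weierstrassSeries a b) = weierstrassSeries (ι a) (ι b) := by
  ext n
  simp [weierstrassSeries, map_weierstrassCoeff]

variable (L : PeriodPair)

lemma eventually_notMem_lattice : ∀ᶠ z in 𝓝[≠] (0 : ℂ), z ∉ L.lattice := by
  filter_upwards [self_mem_nhdsWithin, mem_nhdsWithin_of_mem_nhds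
    (L.compl_lattice_sdiff_singleton_mem_nhds 0)] with z hz₀ hz hzL
  exact hz ⟨hzL, hz₀⟩

lemma hasTaylorSeries_sq_mul_weierstrassP_G :
    HasTaylorSeries (fun z ↦ z ^ 2 * ℘[L] z)
      (1 + X ^ 2 * PowerSeries.mk fun i ↦ if i = 0 then 0 else ((i : ℂ) + 1) * L.G (i + 2)) := by
  have hexcept := L.hasFPowerSeriesAt_weierstrassPExcept 0
  simp only [weierstrassPExcept_zero, sumInvPow_zero] at hexcept
  have htaylor := (HasTaylorSeries.const 1).add
    ((HasTaylorSeries.id.pow 2).mul (.of_hasFPowerSeriesAt hexcept))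
  rw [map_one] at htaylor
  refine htaylor.congr (eventually_nhdsWithin_of_forall fun z (hz : z ≠ 0) ↦ ?_)
  have hP := L.weierstrassPExcept_add 0 z
  simp only [ZeroMemClass.coe_zero, sub_zero] at hP
  simp only [← hP]
  field_simp
  ring

lemma hasTaylorSeries_cube_mul_derivWeierstrassP :
    HasTaylorSeries (fun z ↦ z ^ 3 * ℘'[L] z)
      (C (-2) + X ^ 3 * PowerSeries.mk fun i ↦ ((i : ℂ) + 1) * (i + 2) * L.G (i + 3)) := by
  have hexcept := L.hasFPowerSeriesAt_derivWeierstrassPExcept 0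
  simp only [sumInvPow_zero] at hexcept
  refine ((HasTaylorSeries.const (-2)).add
    ((HasTaylorSeries.id.pow 3).mul (.of_hasFPowerSeriesAt hexcept))).congr
      (eventually_nhdsWithin_of_forall fun z (hz : z ≠ 0) ↦ ?_)
  have hP' := L.derivWeierstrassPExcept_sub 0 z
  simp only [ZeroMemClass.coe_zero, sub_zero] at hP'
  simp only [← hP']
  field_simp
  ring

lemma derivWeierstrassP_series_sq_eq {A U : ℂ⟦X⟧}
    (hA : HasTaylorSeries (fun z ↦ z ^ 2 * ℘[L] z) A)
    (hU : HasTaylorSeries (fun z ↦ z ^ 3 * ℘'[L] z) U) :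
    U ^ 2 = 4 * A ^ 3 - C L.g₂ * X ^ 4 * A - C L.g₃ * X ^ 6 := by
  have hcubic := (((HasTaylorSeries.const 4).mul (hA.pow 3)).add
    (((HasTaylorSeries.const (-L.g₂)).mul (HasTaylorSeries.id.pow 4)).mul hA)).add
      ((HasTaylorSeries.const (-L.g₃)).mul (HasTaylorSeries.id.pow 6))
  have h := ((hU.pow 2).eq_iff hcubic).2 <| by
    filter_upwards [eventually_notMem_lattice L] with z hz
    linear_combination z ^ 6 * L.derivWeierstrassP_sq z hz
  rw [h, map_ofNat, map_neg, map_neg]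
  ring

lemma hasTaylorSeries_sq_mul_weierstrassP :
    HasTaylorSeries (fun z ↦ z ^ 2 * ℘[L] z) (weierstrassSeries L.g₂ L.g₃) := by
  have hA := hasTaylorSeries_sq_mul_weierstrassP_G L
  have hU := hasTaylorSeries_cube_mul_derivWeierstrassP L
  have hequation := derivWeierstrassP_series_sq_eq L hA hU
  convert hA
  ext n
  rw [weierstrassSeries, coeff_mk]
  refine (coeff_eq_weierstrassCoeff (by simp) ?_ ?_ hequation n).symm
  · rw [PeriodPair.g₃]
    simp only [map_add, coeff_one, OfNat.ofNat_ne_zero, ↓reduceIte, coeff_X_pow_mul',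
      Nat.reduceLeDiff, Nat.reduceSub, coeff_mk, Nat.cast_ofNat, Nat.reduceAdd, zero_add]
    ring
  · ext n
    rw [map_sub, coeff_X_mul_derivative, ← map_ofNat (C (R := ℂ)), coeff_C_mul]
    rcases n with _ | _ | _ | n <;> simp [coeff_one, coeff_X_pow_mul']
    ring_nf

end WeierstrassSeries

section HomogenizedEval

open PowerSeries Filter Topology

/-- The power series `X^(2D) P(X⁻² A)`, for a polynomial `P` of degree at most `D`. With `A = X² ℘`
it clears the denominators of `P(℘)`. -/
noncomputable def homogenizedEval {F : Type*} [Field F] (D : ℕ) (P : Polynomial F) (A : F⟦X⟧) :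
    F⟦X⟧ :=
  ∑ i ∈ Finset.range (D + 1), C (P.coeff i) * (A ^ i * X ^ (2 * (D - i)))

variable {k F : Type*} [Field k] [Field F]

lemma map_homogenizedEval (ι : k →+* F) (D : ℕ) (P : Polynomial k) (A : k⟦X⟧) :
    PowerSeries.map ι (homogenizedEval D P A) =
      homogenizedEval D (P.map ι) (PowerSeries.map ι A) := by
  simp [homogenizedEval]

lemma HasTaylorSeries.homogenizedEval {f : ℂ → ℂ} {A : ℂ⟦X⟧}
    (hf : HasTaylorSeries (fun z ↦ z ^ 2 * f z) A) {D : ℕ} {P : Polynomial ℂ}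
    (hP : P.natDegree ≤ D) :
    HasTaylorSeries (fun z ↦ z ^ (2 * D) * P.eval (f z)) (homogenizedEval D P A) := by
  refine (HasTaylorSeries.sum (Finset.range (D + 1)) fun i ↦ (HasTaylorSeries.const (P.coeff i)).mul
    ((hf.pow i).mul (HasTaylorSeries.id.pow (2 * (D - i))))).congr (.of_forall fun z ↦ ?_)
  simp only [Polynomial.eval_eq_sum_range' (Nat.lt_succ_of_le hP), Finset.mul_sum]
  refine Finset.sum_congr rfl fun i hi ↦ ?_
  obtain ⟨m, rfl⟩ := Nat.exists_eq_add_of_le (Finset.mem_range_succ_iff.1 hi)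
  rw [Nat.add_sub_cancel_left]
  ring

lemma dual_coeff_homogenizedEval_mul [Algebra k F] (φ : Module.Dual k F) (D : ℕ)
    (P : Polynomial F) (A B : k⟦X⟧) (n : ℕ) :
    φ (coeff n (homogenizedEval D P (PowerSeries.map (algebraMap k F) A) *
      PowerSeries.map (algebraMap k F) B)) =
    coeff n (homogenizedEval D (trunc (D + 1) (PowerSeries.mk fun i ↦ φ (P.coeff i))) A * B) := by
  simp only [homogenizedEval, Finset.sum_mul, map_sum, mul_assoc, coeff_C_mul]
  refine Finset.sum_congr rfl fun i hi ↦ ?_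
  simp only [← map_X (algebraMap k F), ← map_pow, ← map_mul, coeff_map, coeff_trunc,
    Finset.mem_range.1 hi, if_true, coeff_mk]
  rw [mul_comm, ← Algebra.smul_def, map_smul, smul_eq_mul, mul_comm]

lemma exists_homogenizedEval_mul_eq_of_map (ι : k →+* F) {D : ℕ} {P Q : Polynomial F}
    {A B B' : k⟦X⟧} (hQ : Q ≠ 0) (hQD : Q.natDegree ≤ D)
    (h : homogenizedEval D P (PowerSeries.map ι A) * PowerSeries.map ι B =
      homogenizedEval D Q (PowerSeries.map ι A) * PowerSeries.map ι B') :
    ∃ P' Q' : Polynomial k, P'.natDegree ≤ D ∧ Q'.natDegree ≤ D ∧ Q' ≠ 0 ∧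
      homogenizedEval D P' A * B = homogenizedEval D Q' A * B' := by
  algebraize [ι]
  obtain ⟨φ, hφ⟩ : ∃ φ : Module.Dual k F, φ Q.leadingCoeff ≠ 0 := by
    by_contra! hφ
    exact hQ (Polynomial.leadingCoeff_eq_zero.1 ((Module.forall_dual_apply_eq_zero_iff k _).1 hφ))
  refine ⟨trunc (D + 1) (PowerSeries.mk fun i ↦ φ (P.coeff i)),
    trunc (D + 1) (PowerSeries.mk fun i ↦ φ (Q.coeff i)),
    Nat.le_of_lt_succ (natDegree_trunc_lt _ _), Nat.le_of_lt_succ (natDegree_trunc_lt _ _),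
    fun hQ' ↦ hφ ?_, ?_⟩
  · simpa [coeff_trunc, Nat.lt_succ_of_le hQD] using congrArg (Polynomial.coeff · Q.natDegree) hQ'
  · ext n
    rw [← dual_coeff_homogenizedEval_mul, ← dual_coeff_homogenizedEval_mul]
    exact congrArg (fun S ↦ φ (coeff n S)) h

end HomogenizedEval

section WeierstrassRelation

open PowerSeries Filter Topology PeriodPair

/-- The identity `P(℘[L]) = Q(℘[L]) ℘[L']` near `0`. With `Q ≠ 0` it witnesses that `℘[L']` is a
rational function of `℘[L]`. -/
def WeierstrassRelation (L L' : PeriodPair) (P Q : Polynomial ℂ) : Prop :=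
  (fun z ↦ P.eval (℘[L] z)) =ᶠ[𝓝[≠] 0] fun z ↦ Q.eval (℘[L] z) * ℘[L'] z

lemma weierstrassRelation_iff_homogenizedEval (L L' : PeriodPair) {D : ℕ} {P Q : Polynomial ℂ}
    (hP : P.natDegree ≤ D) (hQ : Q.natDegree ≤ D) :
    WeierstrassRelation L L' P Q ↔
      homogenizedEval D P (weierstrassSeries L.g₂ L.g₃) * X ^ 2 =
        homogenizedEval D Q (weierstrassSeries L.g₂ L.g₃) * weierstrassSeries L'.g₂ L'.g₃ := by
  have hA := hasTaylorSeries_sq_mul_weierstrassP L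
  have hA' := hasTaylorSeries_sq_mul_weierstrassP L'
  rw [((hA.homogenizedEval hP).mul (HasTaylorSeries.id.pow 2)).eq_iff
    ((hA.homogenizedEval hQ).mul hA')]
  refine eventually_congr (eventually_nhdsWithin_of_forall fun z (hz : z ≠ 0) ↦ ?_)
  have hz' : z ^ (2 * D) * z ^ 2 ≠ 0 := by positivity
  rw [← mul_right_inj' hz']
  congr! 1 <;> ring

/-- `x` and `y` are the images of one element of `k` under the embeddings `ι₁` and `ι₂`. For
`k = ℚ̄`, `ι₁` the inclusion and `ι₂ = ι₁ ∘ σ` this says that `y = σ(x)`. -/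
def AreConjugate {k : Type*} [Field k] (ι₁ ι₂ : k →+* ℂ) (x y : ℂ) : Prop :=
  ∃ a, x = ι₁ a ∧ y = ι₂ a

lemma exists_weierstrassRelation_of_areConjugate {k : Type*} [Field k] {ι₁ ι₂ : k →+* ℂ}
    {L L' M M' : PeriodPair}
    (h₂ : AreConjugate ι₁ ι₂ L.g₂ M.g₂) (h₃ : AreConjugate ι₁ ι₂ L.g₃ M.g₃)
    (h₂' : AreConjugate ι₁ ι₂ L'.g₂ M'.g₂) (h₃' : AreConjugate ι₁ ι₂ L'.g₃ M'.g₃)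
    {P Q : Polynomial ℂ} (hQ : Q ≠ 0) (h : WeierstrassRelation L L' P Q) :
    ∃ P' Q' : Polynomial ℂ, Q' ≠ 0 ∧ WeierstrassRelation M M' P' Q' := by
  obtain ⟨a, hLa, hMa⟩ := h₂
  obtain ⟨b, hLb, hMb⟩ := h₃
  obtain ⟨a', hLa', hMa'⟩ := h₂'
  obtain ⟨b', hLb', hMb'⟩ := h₃'
  set D := max P.natDegree Q.natDegree
  rw [weierstrassRelation_iff_homogenizedEval L L' (le_max_left _ _ : _ ≤ D) (le_max_right _ _),
    hLa, hLb, hLa', hLb', ← map_weierstrassSeries, ← map_weierstrassSeries, ← map_X ι₁,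
    ← map_pow] at h
  obtain ⟨P', Q', hP'D, hQ'D, hQ', h'⟩ :=
    exists_homogenizedEval_mul_eq_of_map ι₁ hQ (le_max_right _ _) h
  refine ⟨P'.map ι₂, Q'.map ι₂, by simpa using hQ', ?_⟩
  rw [weierstrassRelation_iff_homogenizedEval M M' (Polynomial.natDegree_map_le.trans hP'D)
    (Polynomial.natDegree_map_le.trans hQ'D), hMa, hMb, hMa', hMb', ← map_weierstrassSeries,
    ← map_weierstrassSeries, ← map_X ι₂, ← map_pow, ← map_homogenizedEval,
    ← map_homogenizedEval, ← map_mul, ← map_mul, h']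

end WeierstrassRelation

section EllipticFunctions

open PeriodPair Filter Topology

lemma eventuallyEq_const_of_periodic_of_meromorphicOrderAt_nonneg (L : PeriodPair) {f : ℂ → ℂ}
    (hf : Meromorphic f) (hper : ∀ l ∈ L.lattice, Function.Periodic f l)
    (hord : ∀ x, 0 ≤ meromorphicOrderAt f x) : ∃ c, ∀ x, f =ᶠ[𝓝[≠] x] fun _ ↦ c := by
  set g := toMeromorphicNFOn f Set.univ
  have hgf (x : ℂ) : g =ᶠ[𝓝[≠] x] f :=
    hf.meromorphicOn.toMeromorphicNFOn_eq_self_on_nhdsNE (Set.mem_univ x)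
  have hg : Differentiable ℂ g := fun x ↦ by
    refine AnalyticAt.differentiableAt ?_
    rw [← (meromorphicNFOn_toMeromorphicNFOn f Set.univ
      (Set.mem_univ x)).meromorphicOrderAt_nonneg_iff_analyticAt, meromorphicOrderAt_congr (hgf x)]
    exact hord x
  have hgper (z l : ℂ) (hl : l ∈ L.lattice) : g (z + l) = g z := by
    have hshift : Tendsto (· + l) (𝓝[≠] z) (𝓝[≠] (z + l)) :=
      Filter.map_add_right_nhdsNE.le
    have : (fun z ↦ g (z + l)) =ᶠ[𝓝[≠] z] g := by
      filter_upwards [hshift.eventually (hgf (z + l)), hgf z] with y hy hy'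
      rw [hy, hy', hper l hl]
    refine Filter.EventuallyEq.eq_of_nhds ((ContinuousAt.eventuallyEq_nhds_iff_eventuallyEq_nhdsNE
      ?_ hg.continuous.continuousAt).1 this)
    have := hg.continuous
    fun_prop
  have hbdd := (IsZLattice.isCompact_range_of_periodic L.lattice g hg.continuous hgper).isBounded
  refine ⟨g 0, fun x ↦ (hgf x).symm.trans (.of_forall fun z ↦ ?_)⟩
  exact hg.apply_eq_apply_of_bounded hbdd z 0

lemma even_of_meromorphicOrderAt_zero_eq {f : ℂ → ℂ} {n : ℤ} (hf : MeromorphicAt f 0)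
    (heven : Function.Even f) (hn : meromorphicOrderAt f 0 = n) : Even n := by
  obtain ⟨g, hg, hg₀, hfg⟩ := (meromorphicOrderAt_eq_int_iff hf).1 hn
  have hneg : Tendsto (fun z : ℂ ↦ -z) (𝓝[≠] 0) (𝓝[≠] 0) := by
    simp [Tendsto]
  have hsymm : g =ᶠ[𝓝[≠] 0] fun z ↦ (-1) ^ n * g (-z) := by
    filter_upwards [hfg, hneg.eventually hfg, self_mem_nhdsWithin] with z hz hz' (hz₀ : z ≠ 0)
    rw [heven, hz, ← neg_one_mul z, sub_zero, sub_zero, mul_zpow, neg_one_mul, smul_eq_mul,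
      smul_eq_mul, mul_comm _ (z ^ n), mul_assoc] at hz'
    exact mul_left_cancel₀ (zpow_ne_zero n hz₀) hz'
  have hlim : Tendsto g (𝓝[≠] 0) (𝓝 (g 0)) := hg.continuousAt.mono_left nhdsWithin_le_nhds
  have hlim' : Tendsto g (𝓝[≠] 0) (𝓝 ((-1) ^ n * g 0)) :=
    ((hlim.comp hneg).const_mul _).congr' hsymm.symm
  have := mul_right_cancel₀ hg₀ ((one_mul _).trans (tendsto_nhds_unique hlim hlim'))
  by_contra hodd
  rw [Int.not_even_iff_odd] at hodd
  rw [hodd.neg_one_zpow] at this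
  norm_num at this

lemma exists_meromorphicOrderAt_lt_sub_smul {𝕜 : Type*} [NontriviallyNormedField 𝕜] {f g : 𝕜 → 𝕜}
    {x : 𝕜} (hf : MeromorphicAt f x) (hg : MeromorphicAt g x) (hg' : meromorphicOrderAt g x ≠ ⊤)
    (hle : meromorphicOrderAt g x ≤ meromorphicOrderAt f x) :
    ∃ c : 𝕜, meromorphicOrderAt g x < meromorphicOrderAt (f - c • g) x := by
  have hquot : f / g * g =ᶠ[𝓝[≠] x] f := by
    filter_upwards [(meromorphicOrderAt_ne_top_iff_eventually_ne_zero hg).1 hg'] with z hz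
    simp [hz]
  have hord : 0 ≤ meromorphicOrderAt (f / g) x := by
    rwa [← WithTop.add_le_add_iff_right hg', zero_add, ← meromorphicOrderAt_mul (hf.div hg) hg,
      meromorphicOrderAt_congr hquot]
  obtain ⟨c, hc⟩ := tendsto_nhds_of_meromorphicOrderAt_nonneg (hf.div hg) hord
  have hfgc : MeromorphicAt (f / g - fun _ ↦ c) x := (hf.div hg).sub (.const c x)
  have hpos : 0 < meromorphicOrderAt (f / g - fun _ ↦ c) x := by
    rw [← tendsto_zero_iff_meromorphicOrderAt_pos hfgc, ← sub_self c]
    exact hc.sub_const c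
  have hsub : f - c • g =ᶠ[𝓝[≠] x] (f / g - fun _ ↦ c) * g := by
    filter_upwards [hquot] with z hz
    simp only [Pi.sub_apply, Pi.smul_apply, Pi.mul_apply, smul_eq_mul, sub_mul] at hz ⊢
    rw [hz]
  refine ⟨c, ?_⟩
  rw [meromorphicOrderAt_congr hsub, meromorphicOrderAt_mul hfgc hg]
  simpa using WithTop.add_lt_add_right hg' hpos

/-- The algebra of even meromorphic functions on `ℂ` which are periodic with respect to `L`. -/
def evenEllipticFunctions (L : PeriodPair) : Subalgebra ℂ (ℂ → ℂ) where
  carrier := {f | Meromorphic f ∧ Function.Even f ∧ ∀ l ∈ L.lattice, Function.Periodic f l}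
  mul_mem' {f g} hf hg :=
    ⟨fun x ↦ (hf.1 x).mul (hg.1 x), fun z ↦ by simp [hf.2.1 z, hg.2.1 z],
      fun l hl ↦ (hf.2.2 l hl).mul (hg.2.2 l hl)⟩
  add_mem' {f g} hf hg :=
    ⟨fun x ↦ (hf.1 x).add (hg.1 x), fun z ↦ by simp [hf.2.1 z, hg.2.1 z],
      fun l hl ↦ (hf.2.2 l hl).add (hg.2.2 l hl)⟩
  algebraMap_mem' c := ⟨fun x ↦ .const c x, fun _ ↦ rfl, fun _ _ _ ↦ rfl⟩

lemma weierstrassP_mem_evenEllipticFunctions {L L' : PeriodPair} (hle : L.lattice ≤ L'.lattice) :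
    ℘[L'] ∈ evenEllipticFunctions L :=
  ⟨L'.meromorphic_weierstrassP, L'.weierstrassP_neg,
    fun l hl z ↦ L'.weierstrassP_add_coe z ⟨l, hle hl⟩⟩

lemma eval_weierstrassP_mem_evenEllipticFunctions (L : PeriodPair) (P : Polynomial ℂ) :
    (fun z ↦ P.eval (℘[L] z)) ∈ evenEllipticFunctions L := by
  have hP : (fun z ↦ P.eval (℘[L] z)) = Polynomial.aeval ℘[L] P := by
    simp [Polynomial.aeval_pi_apply]
  rw [hP]
  exact Algebra.adjoin_le
    (Set.singleton_subset_iff.2 (weierstrassP_mem_evenEllipticFunctions le_rfl))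
    (Polynomial.aeval_mem_adjoin_singleton ℂ _)

lemma meromorphicOrderAt_weierstrassP_nonneg (L : PeriodPair) {x : ℂ} (hx : x ∉ L.lattice) :
    0 ≤ meromorphicOrderAt ℘[L] x :=
  (L.analyticOnNhd_weierstrassP x hx).meromorphicOrderAt_nonneg

lemma meromorphicOrderAt_add_period {f : ℂ → ℂ} {l : ℂ} (hf : Function.Periodic f l) (x : ℂ) :
    meromorphicOrderAt f (x + l) = meromorphicOrderAt f x := by
  rw [← meromorphicOrderAt_comp_add_const_eq_meromorphicOrderAt]
  exact congrArg (meromorphicOrderAt · x) (funext hf)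

lemma exists_le_meromorphicOrderAt_sub_smul_weierstrassP_pow (L : PeriodPair) {f : ℂ → ℂ}
    (hf : MeromorphicAt f 0) (heven : Function.Even f) {n : ℕ}
    (hn : ((-2 * (n + 1 : ℕ) : ℤ) : WithTop ℤ) ≤ meromorphicOrderAt f 0) :
    ∃ c : ℂ, ((-2 * n : ℤ) : WithTop ℤ) ≤ meromorphicOrderAt (f - c • ℘[L] ^ (n + 1)) 0 := by
  have hpow := (L.meromorphic_weierstrassP 0).pow (n + 1)
  have hord : meromorphicOrderAt (℘[L] ^ (n + 1)) 0 = ((-2 * (n + 1 : ℕ) : ℤ) : WithTop ℤ) := by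
    rw [meromorphicOrderAt_pow (L.meromorphic_weierstrassP 0), L.order_weierstrassP 0 (zero_mem _),
      mul_comm]
    rfl
  obtain ⟨c, hc⟩ := exists_meromorphicOrderAt_lt_sub_smul hf hpow
    (hord.trans_ne WithTop.coe_ne_top) (hord.trans_le hn)
  refine ⟨c, ?_⟩
  have heven' : Function.Even (f - c • ℘[L] ^ (n + 1)) := fun z ↦ by simp [heven z]
  cases hm : meromorphicOrderAt (f - c • ℘[L] ^ (n + 1)) 0 with
  | top => exact le_top
  | coe m =>
    obtain ⟨j, rfl⟩ := even_of_meromorphicOrderAt_zero_eq (hf.sub (hpow.const_smul c)) heven' hm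
    rw [hord, hm, WithTop.coe_lt_coe] at hc
    rw [WithTop.coe_le_coe]
    lia

lemma exists_eventuallyEq_eval_weierstrassP_of_le_meromorphicOrderAt_zero {L : PeriodPair}
    {f : ℂ → ℂ} (hf : f ∈ evenEllipticFunctions L)
    (hreg : ∀ x ∉ L.lattice, 0 ≤ meromorphicOrderAt f x) (n : ℕ)
    (hn : ((-2 * n : ℤ) : WithTop ℤ) ≤ meromorphicOrderAt f 0) :
    ∃ P : Polynomial ℂ, ∀ x, f =ᶠ[𝓝[≠] x] fun z ↦ P.eval (℘[L] z) := by
  induction n generalizing f with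
  | zero =>
    obtain ⟨c, hc⟩ := eventuallyEq_const_of_periodic_of_meromorphicOrderAt_nonneg L hf.1 hf.2.2
      fun x ↦ by
        by_cases hx : x ∈ L.lattice
        · simpa [← meromorphicOrderAt_add_period (hf.2.2 x hx) 0] using hn
        · exact hreg x hx
    exact ⟨.C c, by simpa using hc⟩
  | succ n ih =>
    obtain ⟨c, hc⟩ := exists_le_meromorphicOrderAt_sub_smul_weierstrassP_pow L (hf.1 0) hf.2.1 hn
    have hpow := pow_mem (weierstrassP_mem_evenEllipticFunctions (le_refl L.lattice)) (n + 1)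
    have hreg' (x : ℂ) (hx : x ∉ L.lattice) :
        0 ≤ meromorphicOrderAt (f - c • ℘[L] ^ (n + 1)) x := by
      have hanalytic : AnalyticAt ℂ (-(c • ℘[L] ^ (n + 1))) x :=
        (((L.analyticOnNhd_weierstrassP x hx).pow _).const_smul).neg
      rw [sub_eq_add_neg]
      exact (le_min (hreg x hx) hanalytic.meromorphicOrderAt_nonneg).trans
        (meromorphicOrderAt_add (hf.1 x) hanalytic.meromorphicAt)
    obtain ⟨P, hP⟩ := ih (sub_mem hf (Subalgebra.smul_mem _ hpow c)) hreg' hc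
    refine ⟨P + .C c * .X ^ (n + 1), fun x ↦ ?_⟩
    filter_upwards [hP x] with z hz
    simp [← hz]

lemma exists_eventuallyEq_eval_weierstrassP {L : PeriodPair}
    {f : ℂ → ℂ} (hf : f ∈ evenEllipticFunctions L)
    (hreg : ∀ x ∉ L.lattice, 0 ≤ meromorphicOrderAt f x) :
    ∃ P : Polynomial ℂ, ∀ x, f =ᶠ[𝓝[≠] x] fun z ↦ P.eval (℘[L] z) := by
  obtain ⟨n, hn⟩ : ∃ n : ℕ, ((-2 * n : ℤ) : WithTop ℤ) ≤ meromorphicOrderAt f 0 := by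
    cases meromorphicOrderAt f 0 with
    | top => exact ⟨0, le_top⟩
    | coe m => exact ⟨m.natAbs, WithTop.coe_le_coe.2 (by lia)⟩
  exact exists_eventuallyEq_eval_weierstrassP_of_le_meromorphicOrderAt_zero hf hreg n hn

end EllipticFunctions

section RationalRelations

open PeriodPair Filter Topology

lemma exists_finset_cosetRepresentatives {L L' : PeriodPair} (hle : L.lattice ≤ L'.lattice) :
    ∃ W : Finset ℂ, ∀ x ∈ L'.lattice, ∃ w ∈ W, x - w ∈ L.lattice := by
  have hdisc : IsDiscrete (L'.lattice : Set ℂ) := ⟨inferInstanceAs (DiscreteTopology L'.lattice)⟩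
  have hfin : (ZSpan.fundamentalDomain L.basis ∩ (L'.lattice : Set ℂ)).Finite :=
    Metric.finite_isBounded_inter_isClosed hdisc
      (ZSpan.fundamentalDomain_isBounded L.basis) L'.isClosed_lattice
  refine ⟨hfin.toFinset, fun x hx ↦ ?_⟩
  have hfract : x - ZSpan.fract L.basis x ∈ L.lattice := by
    rw [L.lattice_eq_span_range_basis, ZSpan.fract_apply, sub_sub_cancel]
    exact (ZSpan.floor L.basis x).2
  refine ⟨ZSpan.fract L.basis x, ?_, hfract⟩
  rw [Set.Finite.mem_toFinset]
  exact ⟨ZSpan.fract_mem_fundamentalDomain _ _, by simpa using sub_mem hx (hle hfract)⟩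

lemma one_le_meromorphicOrderAt_sub_of_analyticAt {f : ℂ → ℂ} {x : ℂ} (hf : AnalyticAt ℂ f x) :
    1 ≤ meromorphicOrderAt (fun z ↦ f z - f x) x := by
  have hanalytic : AnalyticAt ℂ (fun z ↦ f z - f x) x := hf.sub analyticAt_const
  have hpos : 0 < meromorphicOrderAt (fun z ↦ f z - f x) x := by
    rw [← tendsto_zero_iff_meromorphicOrderAt_pos hanalytic.meromorphicAt]
    simpa using hanalytic.continuousAt.tendsto.mono_left (nhdsWithin_le_nhds (s := {x}ᶜ))
  cases h : meromorphicOrderAt (fun z ↦ f z - f x) x with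
  | top => exact le_top
  | coe m => exact WithTop.coe_le_coe.2 (WithTop.coe_pos.1 (h ▸ hpos))

lemma le_meromorphicOrderAt_eval_of_pow_dvd {f : ℂ → ℂ} {x : ℂ} (hf : AnalyticAt ℂ f x)
    {Q : Polynomial ℂ} {n : ℕ} (hQ : (.X - .C (f x)) ^ n ∣ Q) :
    (n : WithTop ℤ) ≤ meromorphicOrderAt (fun z ↦ Q.eval (f z)) x := by
  have hanalytic (R : Polynomial ℂ) : AnalyticAt ℂ (fun z ↦ R.eval (f z)) x := by
    simpa using hf.aeval_polynomial R
  obtain ⟨R, rfl⟩ := hQ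
  induction n with
  | zero => exact (hanalytic _).meromorphicOrderAt_nonneg
  | succ n ih =>
    have hfactor : (fun z ↦ ((.X - .C (f x)) ^ (n + 1) * R).eval (f z)) =
        (fun z ↦ ((.X - .C (f x)) ^ n * R).eval (f z)) * fun z ↦ f z - f x := by
      ext z
      simp only [Polynomial.eval_mul, Polynomial.eval_pow, Polynomial.eval_sub, Polynomial.eval_X,
        Polynomial.eval_C, Pi.mul_apply]
      ring
    rw [hfactor, meromorphicOrderAt_mul (hanalytic _).meromorphicAt
      (hf.fun_sub analyticAt_const).meromorphicAt, Nat.cast_succ]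
    exact add_le_add ih (one_le_meromorphicOrderAt_sub_of_analyticAt hf)

lemma exists_weierstrassRelation_of_lattice_le {L L' : PeriodPair} (hle : L.lattice ≤ L'.lattice) :
    ∃ P Q : Polynomial ℂ, Q ≠ 0 ∧ WeierstrassRelation L L' P Q := by
  obtain ⟨W, hW⟩ := exists_finset_cosetRepresentatives hle
  -- The factors of `Q` cancel the double poles of `℘[L']` at the points of `L'` outside `L`.
  set Q : Polynomial ℂ := ∏ w ∈ W, (.X - .C (℘[L] w)) ^ 2
  have hQ : Q ≠ 0 :=
    Finset.prod_ne_zero_iff.2 fun w _ ↦ pow_ne_zero 2 (Polynomial.X_sub_C_ne_zero _)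
  have hreg (x : ℂ) (hx : x ∉ L.lattice) :
      0 ≤ meromorphicOrderAt ((fun z ↦ Q.eval (℘[L] z)) * ℘[L']) x := by
    have hanalytic := L.analyticOnNhd_weierstrassP x hx
    rw [meromorphicOrderAt_mul ((eval_weierstrassP_mem_evenEllipticFunctions L Q).1 x)
      (L'.meromorphic_weierstrassP x)]
    by_cases hx' : x ∈ L'.lattice
    · obtain ⟨w, hw, hxw⟩ := hW x hx'
      have hdvd : (.X - .C (℘[L] x)) ^ 2 ∣ Q := by
        have hval : ℘[L] x = ℘[L] w := by simpa using L.weierstrassP_add_coe w ⟨_, hxw⟩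
        rw [hval]
        exact Finset.dvd_prod_of_mem
          (fun w ↦ (Polynomial.X - Polynomial.C (℘[L] w)) ^ 2) hw
      rw [L'.order_weierstrassP x hx']
      exact add_le_add_left (le_meromorphicOrderAt_eval_of_pow_dvd hanalytic hdvd) (-2)
    · have hdvd : (.X - .C (℘[L] x)) ^ 0 ∣ Q := one_dvd Q
      exact add_nonneg (le_meromorphicOrderAt_eval_of_pow_dvd hanalytic hdvd)
        (meromorphicOrderAt_weierstrassP_nonneg L' hx')
  obtain ⟨P, hP⟩ := exists_eventuallyEq_eval_weierstrassP
    (mul_mem (eval_weierstrassP_mem_evenEllipticFunctions L Q)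
      (weierstrassP_mem_evenEllipticFunctions hle)) hreg
  exact ⟨P, Q, hQ, (hP 0).symm⟩

lemma meromorphicOrderAt_eval_weierstrassP_zero_ne_top (L : PeriodPair) {Q : Polynomial ℂ}
    (hQ : Q ≠ 0) : meromorphicOrderAt (fun z ↦ Q.eval (℘[L] z)) 0 ≠ ⊤ := by
  have hpole : Tendsto ℘[L] (𝓝[≠] 0) (Bornology.cobounded ℂ) := by
    refine tendsto_cobounded_of_meromorphicOrderAt_neg ?_
    rw [L.order_weierstrassP 0 (zero_mem _)]
    decide
  rw [meromorphicOrderAt_ne_top_iff_eventually_ne_zero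
    ((eval_weierstrassP_mem_evenEllipticFunctions L Q).1 0)]
  exact hpole.eventually (Polynomial.finite_setOfPred_isRoot hQ).isBounded.compl

lemma eventuallyEq_nhdsNE_of_meromorphic {f g : ℂ → ℂ} (hf : Meromorphic f) (hg : Meromorphic g)
    {x : ℂ} (h : f =ᶠ[𝓝[≠] x] g) (y : ℂ) : f =ᶠ[𝓝[≠] y] g := by
  have hx : meromorphicOrderAt (f - g) x = ⊤ :=
    meromorphicOrderAt_eq_top_iff.2 (h.mono fun z hz ↦ sub_eq_zero.2 hz)
  have hy : meromorphicOrderAt (f - g) y = ⊤ := by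
    by_contra hy
    exact MeromorphicOn.meromorphicOrderAt_ne_top_of_isPreconnected
      (fun z _ ↦ (hf z).sub (hg z)) isPreconnected_univ (Set.mem_univ y) (Set.mem_univ x) hy hx
  exact (meromorphicOrderAt_eq_top_iff.1 hy).mono fun z hz ↦ sub_eq_zero.1 hz

lemma lattice_le_of_weierstrassRelation {L L' : PeriodPair} {P Q : Polynomial ℂ} (hQ : Q ≠ 0)
    (h : WeierstrassRelation L L' P Q) : L.lattice ≤ L'.lattice := by
  intro l hl
  have hP := eval_weierstrassP_mem_evenEllipticFunctions L P
  have hQ' := eval_weierstrassP_mem_evenEllipticFunctions L Q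
  have hL' := L'.meromorphic_weierstrassP
  have hord (x : ℂ) : meromorphicOrderAt (fun z ↦ P.eval (℘[L] z)) x =
      meromorphicOrderAt (fun z ↦ Q.eval (℘[L] z)) x + meromorphicOrderAt ℘[L'] x := by
    rw [← meromorphicOrderAt_mul (hQ'.1 x) (hL' x)]
    exact meromorphicOrderAt_congr (eventuallyEq_nhdsNE_of_meromorphic hP.1
      (fun z ↦ (hQ'.1 z).mul (hL' z)) h x)
  have hpole : meromorphicOrderAt ℘[L'] l = meromorphicOrderAt ℘[L'] 0 := by
    refine WithTop.add_left_cancel (meromorphicOrderAt_eval_weierstrassP_zero_ne_top L hQ) ?_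
    rw [← hord, ← meromorphicOrderAt_add_period (hP.2.2 l hl),
      ← meromorphicOrderAt_add_period (hQ'.2.2 l hl), zero_add, hord]
  by_contra hl'
  have hnonneg := meromorphicOrderAt_weierstrassP_nonneg L' hl'
  rw [hpole, L'.order_weierstrassP 0 (zero_mem _)] at hnonneg
  exact absurd hnonneg (by decide)

end RationalRelations

section Lattices

open Pointwise

/-- A lattice in `ℂ`: a discrete additive subgroup that spans `ℂ` over `ℝ`. Unlike a `PeriodPair`,
it does not come with a choice of basis. -/
structure IsLattice (Λ : AddSubgroup ℂ) : Prop where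
  discrete : DiscreteTopology Λ
  span_eq_top : Submodule.span ℝ (Λ : Set ℂ) = ⊤

variable {Λ Λ' M M' : AddSubgroup ℂ}

lemma IsLattice.of_smul_le (hΛ : IsLattice Λ) {a b : ℂ} (ha : a ≠ 0) (hb : b ≠ 0)
    (haΛ : a • Λ ≤ Λ') (hbΛ' : b • Λ' ≤ Λ) : IsLattice Λ' where
  discrete := by
    have := hΛ.discrete
    refine DiscreteTopology.of_continuous_injective (β := Λ)
      (f := fun z : Λ' ↦ ⟨b * z, hbΛ' (AddSubgroup.smul_mem_pointwise_smul _ b _ z.2)⟩)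
      (by fun_prop) fun x y hxy ↦ ?_
    exact Subtype.ext (mul_left_cancel₀ hb (congrArg Subtype.val hxy))
  span_eq_top := by
    have hspan : (Submodule.span ℝ (Λ : Set ℂ)).map (LinearMap.mulLeft ℝ a) = ⊤ := by
      rw [hΛ.span_eq_top, Submodule.map_top, LinearMap.range_eq_top]
      exact mul_left_surjective₀ ha
    rw [Submodule.map_span] at hspan
    exact top_le_iff.1 (hspan.ge.trans (Submodule.span_mono haΛ))

lemma IsLattice.smul (hΛ : IsLattice Λ) {x : ℂ} (hx : x ≠ 0) : IsLattice (x • Λ) :=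
  hΛ.of_smul_le hx (inv_ne_zero hx) le_rfl (inv_smul_smul₀ hx Λ).le

lemma IsLattice.exists_lattice_eq (hΛ : IsLattice Λ) :
    ∃ L : PeriodPair, L.lattice.toAddSubgroup = Λ := by
  let E : Submodule ℤ ℂ := AddSubgroup.toIntSubmodule Λ
  have : DiscreteTopology E := hΛ.discrete
  have : IsZLattice ℝ E := ⟨hΛ.span_eq_top⟩
  have : Module.Finite ℤ E := ZLattice.module_finite ℝ E
  have : Module.Free ℤ E := ZLattice.module_free ℝ E
  have hrank : Module.finrank ℤ E = 2 := by
    rw [ZLattice.rank ℝ E, Complex.finrank_real_complex]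
  let b := Module.finBasisOfFinrankEq ℤ E hrank
  let B := b.ofZLatticeBasis ℝ E
  have hB : ![B 0, B 1] = B := List.ofFn_inj.1 rfl
  refine ⟨⟨B 0, B 1, hB ▸ B.linearIndependent⟩, ?_⟩
  rw [PeriodPair.lattice, ← Matrix.range_cons_cons_empty _ _ ![], hB, b.ofZLatticeBasis_span ℝ]
  rfl

lemma G_eq_tsum_ne_zero (L : PeriodPair) {n : ℕ} (hn : n ≠ 0) :
    L.G n = ∑' w : {w : ℂ // w ∈ L.lattice.toAddSubgroup ∧ w ≠ 0}, ((w : ℂ) ^ n)⁻¹ := by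
  have hG := tsum_subtype (L.lattice : Set ℂ) fun z ↦ (z ^ n)⁻¹
  refine hG.trans (.trans (tsum_congr fun z ↦ ?_)
    (tsum_subtype {w : ℂ | w ∈ L.lattice.toAddSubgroup ∧ w ≠ 0} fun z ↦ (z ^ n)⁻¹).symm)
  classical
  rw [Set.indicator_apply, Set.indicator_apply]
  by_cases hz : z = 0 <;> simp [hz, hn]

lemma g₂_lattice (L : PeriodPair) : g₂ L.lattice.toAddSubgroup = L.g₂ := by
  rw [g₂, PeriodPair.g₂, G_eq_tsum_ne_zero L four_ne_zero]

lemma g₃_lattice (L : PeriodPair) : g₃ L.lattice.toAddSubgroup = L.g₃ := by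
  rw [g₃, PeriodPair.g₃, G_eq_tsum_ne_zero L (by decide)]

lemma tsum_inv_pow_smul (Λ : AddSubgroup ℂ) {x : ℂ} (hx : x ≠ 0) (n : ℕ) :
    ∑' w : {w : ℂ // w ∈ x • Λ ∧ w ≠ 0}, ((w : ℂ) ^ n)⁻¹ =
      (x ^ n)⁻¹ * ∑' w : {w : ℂ // w ∈ Λ ∧ w ≠ 0}, ((w : ℂ) ^ n)⁻¹ := by
  let e : {w : ℂ // w ∈ Λ ∧ w ≠ 0} ≃ {w : ℂ // w ∈ x • Λ ∧ w ≠ 0} :=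
    (Equiv.mulLeft₀ x hx).subtypeEquiv fun w ↦
      and_congr (AddSubgroup.smul_mem_pointwise_smul_iff₀ hx Λ w).symm
        (mul_ne_zero_iff_left hx).symm
  rw [← tsum_mul_left, ← e.tsum_eq]
  refine tsum_congr fun w ↦ ?_
  rw [show (e w : ℂ) = x * w from rfl, mul_pow, mul_inv]

lemma g₂_smul (Λ : AddSubgroup ℂ) {x : ℂ} (hx : x ≠ 0) : g₂ (x • Λ) = (x ^ 4)⁻¹ * g₂ Λ := by
  rw [g₂, g₂, tsum_inv_pow_smul Λ hx, mul_left_comm]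

lemma g₃_smul (Λ : AddSubgroup ℂ) {x : ℂ} (hx : x ≠ 0) : g₃ (x • Λ) = (x ^ 6)⁻¹ * g₃ Λ := by
  rw [g₃, g₃, tsum_inv_pow_smul Λ hx, mul_left_comm]

variable {k : Type*} [Field k] {ι₁ ι₂ : k →+* ℂ}

/-- The subgroups `Λ` and `M` have conjugate invariants. For lattices this means that the elliptic
curves `ℂ/Λ` and `ℂ/M` have Weierstrass models which are the two base changes of one model over
`k`. -/
structure AreConjugateLattices (ι₁ ι₂ : k →+* ℂ) (Λ M : AddSubgroup ℂ) : Prop where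
  g₂_conj : AreConjugate ι₁ ι₂ (g₂ Λ) (g₂ M)
  g₃_conj : AreConjugate ι₁ ι₂ (g₃ Λ) (g₃ M)

lemma AreConjugateLattices.smul (h : AreConjugateLattices ι₁ ι₂ Λ M) {x : k} (hx : x ≠ 0) :
    AreConjugateLattices ι₁ ι₂ (ι₁ x • Λ) (ι₂ x • M) where
  g₂_conj := by
    obtain ⟨a, hΛ, hM⟩ := h.g₂_conj
    exact ⟨(x ^ 4)⁻¹ * a, by simp [g₂_smul, hx, hΛ], by simp [g₂_smul, hx, hM]⟩
  g₃_conj := by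
    obtain ⟨b, hΛ, hM⟩ := h.g₃_conj
    exact ⟨(x ^ 6)⁻¹ * b, by simp [g₃_smul, hx, hΛ], by simp [g₃_smul, hx, hM]⟩

lemma AreConjugateLattices.le_of_le (hΛ : IsLattice Λ) (hΛ' : IsLattice Λ') (hM : IsLattice M)
    (hM' : IsLattice M') (h : AreConjugateLattices ι₁ ι₂ Λ M)
    (h' : AreConjugateLattices ι₁ ι₂ Λ' M') (hle : Λ ≤ Λ') : M ≤ M' := by
  obtain ⟨L, rfl⟩ := hΛ.exists_lattice_eq
  obtain ⟨L', rfl⟩ := hΛ'.exists_lattice_eq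
  obtain ⟨T, rfl⟩ := hM.exists_lattice_eq
  obtain ⟨T', rfl⟩ := hM'.exists_lattice_eq
  obtain ⟨h₂, h₃⟩ := h
  obtain ⟨h₂', h₃'⟩ := h'
  simp only [g₂_lattice, g₃_lattice] at h₂ h₃ h₂' h₃'
  obtain ⟨P, Q, hQ, hPQ⟩ := exists_weierstrassRelation_of_lattice_le (L := L) (L' := L') hle
  obtain ⟨P', Q', hQ', hPQ'⟩ := exists_weierstrassRelation_of_areConjugate h₂ h₃ h₂' h₃' hQ hPQ
  exact lattice_le_of_weierstrassRelation hQ' hPQ'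

lemma AreConjugateLattices.smul_le_of_smul_le (hΛ : IsLattice Λ) (hΛ' : IsLattice Λ')
    (hM : IsLattice M) (hM' : IsLattice M') (h : AreConjugateLattices ι₁ ι₂ Λ M)
    (h' : AreConjugateLattices ι₁ ι₂ Λ' M') {x : k} (hle : ι₁ x • Λ ≤ Λ') : ι₂ x • M ≤ M' := by
  rcases eq_or_ne x 0 with rfl | hx
  · rintro _ ⟨z, -, rfl⟩
    simp
  · exact (h.smul hx).le_of_le (hΛ.smul (by simpa using hx)) hΛ' (hM.smul (by simpa using hx)) hM'
      h' hle

end Lattices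

section IdealMul

open FractionalIdeal Pointwise

variable {K : Type*} [Field K] [NumberField K] {τ : K →+* ℂ}
  {𝔞 𝔟 : FractionalIdeal (nonZeroDivisors (𝓞 K)) K} {S T : Set ℂ} {Λ Λ' M M' : AddSubgroup ℂ}

lemma mul_mem_idealMul {a : K} (ha : a ∈ 𝔞) {s : ℂ} (hs : s ∈ S) : τ a * s ∈ idealMul τ 𝔞 S :=
  AddSubgroup.subset_closure ⟨a, ha, s, hs, rfl⟩

lemma idealMul_le_iff : idealMul τ 𝔞 S ≤ Λ ↔ ∀ a ∈ 𝔞, ∀ s ∈ S, τ a * s ∈ Λ := by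
  rw [idealMul, AddSubgroup.closure_le]
  refine ⟨fun h a ha s hs ↦ h ⟨a, ha, s, hs, rfl⟩, ?_⟩
  rintro h _ ⟨a, ha, s, hs, rfl⟩
  exact h a ha s hs

lemma idealMul_le_iff_smul_le : idealMul τ 𝔞 (Λ : Set ℂ) ≤ Λ' ↔ ∀ a ∈ 𝔞, τ a • Λ ≤ Λ' := by
  refine idealMul_le_iff.trans (forall₂_congr fun a _ ↦ ?_)
  rw [← SetLike.coe_subset_coe, AddSubgroup.coe_pointwise_smul, Set.smul_set_subset_iff]
  rfl

lemma idealMul_mono (h : S ⊆ T) : idealMul τ 𝔞 S ≤ idealMul τ 𝔞 T :=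
  idealMul_le_iff.2 fun _ ha _ hs ↦ mul_mem_idealMul ha (h hs)

lemma idealMul_mul_le (τ : K →+* ℂ) (𝔞 𝔟 : FractionalIdeal (nonZeroDivisors (𝓞 K)) K) (S : Set ℂ) :
    idealMul τ (𝔞 * 𝔟) S ≤ idealMul τ 𝔞 (idealMul τ 𝔟 S : Set ℂ) := by
  refine idealMul_le_iff.2 fun x hx s hs ↦ ?_
  refine FractionalIdeal.mul_induction_on hx (fun a ha b hb ↦ ?_) fun x y hx hy ↦ ?_
  · rw [map_mul, mul_assoc]
    exact mul_mem_idealMul ha (mul_mem_idealMul hb hs)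
  · rw [map_add, add_mul]
    exact add_mem hx hy

lemma idealMul_idealMul_le (τ : K →+* ℂ) (𝔞 𝔟 : FractionalIdeal (nonZeroDivisors (𝓞 K)) K)
    (S : Set ℂ) : idealMul τ 𝔞 (idealMul τ 𝔟 S : Set ℂ) ≤ idealMul τ (𝔞 * 𝔟) S := by
  refine idealMul_le_iff.2 fun a ha s hs ↦ ?_
  have hle : idealMul τ 𝔟 S ≤ (idealMul τ (𝔞 * 𝔟) S).comap (AddMonoidHom.mulLeft (τ a)) := by
    refine idealMul_le_iff.2 fun b hb s hs ↦ ?_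
    rw [AddSubgroup.mem_comap, AddMonoidHom.coe_mulLeft, ← mul_assoc, ← map_mul]
    exact mul_mem_idealMul (FractionalIdeal.mul_mem_mul ha hb) hs
  exact hle hs

lemma idealMul_idealMul (τ : K →+* ℂ) (𝔞 𝔟 : FractionalIdeal (nonZeroDivisors (𝓞 K)) K)
    (S : Set ℂ) : idealMul τ 𝔞 (idealMul τ 𝔟 S : Set ℂ) = idealMul τ (𝔞 * 𝔟) S :=
  le_antisymm (idealMul_idealMul_le τ 𝔞 𝔟 S) (idealMul_mul_le τ 𝔞 𝔟 S)

lemma le_idealMul_one (τ : K →+* ℂ) (Λ : AddSubgroup ℂ) : Λ ≤ idealMul τ 1 (Λ : Set ℂ) :=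
  fun s hs ↦ by simpa using mul_mem_idealMul (τ := τ) (one_mem_one (nonZeroDivisors (𝓞 K))) hs

lemma idealMul_one_le (hΛ : ∀ r : 𝓞 K, ∀ w ∈ Λ, τ r * w ∈ Λ) : idealMul τ 1 (Λ : Set ℂ) ≤ Λ := by
  refine idealMul_le_iff.2 fun a ha s hs ↦ ?_
  obtain ⟨r, rfl⟩ := (mem_one_iff _).1 ha
  exact hΛ r s hs

lemma idealMul_inv_idealMul_le (h𝔞 : 𝔞 ≠ 0) (hΛ : ∀ r : 𝓞 K, ∀ w ∈ Λ, τ r * w ∈ Λ) :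
    idealMul τ 𝔞⁻¹ (idealMul τ 𝔞 (Λ : Set ℂ) : Set ℂ) ≤ Λ := by
  rw [idealMul_idealMul, inv_mul_cancel₀ h𝔞]
  exact idealMul_one_le hΛ

lemma IsLattice.idealMul (hΛ : IsLattice Λ) (h𝔞 : 𝔞 ≠ 0)
    (hstable : ∀ r : 𝓞 K, ∀ w ∈ Λ, τ r * w ∈ Λ) : IsLattice (idealMul τ 𝔞 (Λ : Set ℂ)) := by
  obtain ⟨a, ha, ha₀⟩ : ∃ a ∈ 𝔞, a ≠ 0 := by
    simpa only [ne_eq, eq_zero_iff, not_forall, exists_prop] using h𝔞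
  obtain ⟨b, hb, hb₀⟩ : ∃ b ∈ 𝔞⁻¹, b ≠ 0 := by
    simpa only [ne_eq, eq_zero_iff, not_forall, exists_prop] using inv_ne_zero h𝔞
  exact hΛ.of_smul_le ((map_ne_zero τ).2 ha₀) ((map_ne_zero τ).2 hb₀)
    (idealMul_le_iff_smul_le.1 le_rfl a ha)
    (idealMul_le_iff_smul_le.1 (idealMul_inv_idealMul_le h𝔞 hstable) b hb)

variable {k : Type*} [Field k] {ι₁ ι₂ : k →+* ℂ}

lemma AreConjugateLattices.idealMul_le_of_idealMul_le (hΛ : IsLattice Λ) (hΛ' : IsLattice Λ')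
    (hM : IsLattice M) (hM' : IsLattice M') (h : AreConjugateLattices ι₁ ι₂ Λ M)
    (h' : AreConjugateLattices ι₁ ι₂ Λ' M') {ρ : K →+* k}
    (hle : idealMul (ι₁.comp ρ) 𝔞 (Λ : Set ℂ) ≤ Λ') : idealMul (ι₂.comp ρ) 𝔞 (M : Set ℂ) ≤ M' := by
  rw [idealMul_le_iff_smul_le] at hle ⊢
  exact fun a ha ↦ h.smul_le_of_smul_le hΛ hΛ' hM hM' h' (hle a ha)

/-- The embedding `τ` with its codomain restricted to `ℚ̄`. Here `ℚ̄` is the intermediate field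
`algebraicClosure ℚ ℂ`, whose elements are by definition those of `integralClosure ℚ ℂ`. -/
noncomputable def codRestrictAlgebraicClosure (τ : K →+* ℂ) : K →+* algebraicClosure ℚ ℂ :=
  τ.codRestrict (algebraicClosure ℚ ℂ) fun a ↦
    (Algebra.IsIntegral.isIntegral (R := ℚ) a).map τ.toRatAlgHom

lemma closure_conjugate_mul_eq_idealMul (τ : K →+* ℂ)
    (σ : integralClosure ℚ ℂ ≃+* integralClosure ℚ ℂ)
    (𝔞 : FractionalIdeal (nonZeroDivisors (𝓞 K)) K) (M : AddSubgroup ℂ) :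
    AddSubgroup.closure {x : ℂ | ∃ a ∈ 𝔞, ∃ m ∈ M, ∃ h : τ a ∈ integralClosure ℚ ℂ,
      x = (σ ⟨τ a, h⟩ : ℂ) * m} =
    idealMul (((algebraMap (algebraicClosure ℚ ℂ) ℂ).comp σ.toRingHom).comp
      (codRestrictAlgebraicClosure τ)) 𝔞 (M : Set ℂ) := by
  rw [idealMul]
  congr! 9 with x a m
  exact exists_prop_of_true (codRestrictAlgebraicClosure τ a).2

end IdealMul

theorem stmt_5_general {K k : Type*} [Field K] [NumberField K] [Field k] (ρ : K →+* k)
    (ι₁ ι₂ : k →+* ℂ) {Λ M N : AddSubgroup ℂ} (hΛ : IsLattice Λ) (hM : IsLattice M)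
    (hN : IsLattice N) (hstable : ∀ r : 𝓞 K, ∀ w ∈ Λ, ι₁.comp ρ r * w ∈ Λ)
    {𝔞 : FractionalIdeal (nonZeroDivisors (𝓞 K)) K} (h𝔞 : 𝔞 ≠ 0)
    (hΛM : AreConjugateLattices ι₁ ι₂ Λ M)
    (h𝔞ΛN : AreConjugateLattices ι₁ ι₂ (idealMul (ι₁.comp ρ) 𝔞 (Λ : Set ℂ)) N) :
    N = idealMul (ι₂.comp ρ) 𝔞 (M : Set ℂ) := by
  have h𝔞Λ : IsLattice (idealMul (ι₁.comp ρ) 𝔞 (Λ : Set ℂ)) := hΛ.idealMul h𝔞 hstable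
  have hinv : idealMul (ι₂.comp ρ) 𝔞⁻¹ (N : Set ℂ) ≤ M :=
    h𝔞ΛN.idealMul_le_of_idealMul_le h𝔞Λ hΛ hN hM hΛM (idealMul_inv_idealMul_le h𝔞 hstable)
  refine le_antisymm ?_ (hΛM.idealMul_le_of_idealMul_le hΛ h𝔞Λ hM hN h𝔞ΛN le_rfl)
  calc N ≤ idealMul (ι₂.comp ρ) 1 (N : Set ℂ) := le_idealMul_one _ N
    _ = idealMul (ι₂.comp ρ) 𝔞 (idealMul (ι₂.comp ρ) 𝔞⁻¹ (N : Set ℂ) : Set ℂ) := by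
      rw [idealMul_idealMul, mul_inv_cancel₀ h𝔞]
    _ ≤ idealMul (ι₂.comp ρ) 𝔞 (M : Set ℂ) := idealMul_mono hinv

/-- Let `Λ` be a CM lattice with algebraic `g₂, g₃`, `𝔞` a nonzero fractional
ideal (with `g₂ (𝔞Λ)`, `g₃ (𝔞Λ)` algebraic), `σ` an automorphism of `ℚ̄` (the integral closure
of `ℚ` in `ℂ`), `M` a lattice with `gₖ(M) = σ(gₖ(Λ))` and `N` a lattice with
`gₖ(N) = σ(gₖ(𝔞Λ))`.  Then `N = σ(𝔞)·M`, the additive subgroup generated by the elements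
`σ(τ(a))·m`, `a ∈ 𝔞`, `m ∈ M`. -/
theorem stmt_5
    (K : Type*) [Field K] [NumberField K]
    (hdeg : Module.finrank ℚ K = 2)
    (hcplx : IsEmpty (K →+* ℝ))
    (τ : K →+* ℂ)
    (σ : integralClosure ℚ ℂ ≃+* integralClosure ℚ ℂ)
    (Λ M N : AddSubgroup ℂ)
    (hdiscΛ : DiscreteTopology Λ) (hdiscM : DiscreteTopology M)
    (hdiscN : DiscreteTopology N)
    (hspanΛ : Submodule.span ℝ (Λ : Set ℂ) = ⊤)
    (hspanM : Submodule.span ℝ (M : Set ℂ) = ⊤)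
    (hspanN : Submodule.span ℝ (N : Set ℂ) = ⊤)
    (hCM : {z : ℂ | ∀ w ∈ Λ, z * w ∈ Λ} =
      Set.range fun a : 𝓞 K => τ (algebraMap (𝓞 K) K a))
    (𝔞 : FractionalIdeal (nonZeroDivisors (𝓞 K)) K) (h𝔞 : 𝔞 ≠ 0)
    (h2Λ : g₂ Λ ∈ integralClosure ℚ ℂ) (h3Λ : g₃ Λ ∈ integralClosure ℚ ℂ)
    (h2aΛ : g₂ (idealMul τ 𝔞 (Λ : Set ℂ)) ∈ integralClosure ℚ ℂ)
    (h3aΛ : g₃ (idealMul τ 𝔞 (Λ : Set ℂ)) ∈ integralClosure ℚ ℂ)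
    (hM2 : g₂ M = (σ ⟨g₂ Λ, h2Λ⟩ : ℂ)) (hM3 : g₃ M = (σ ⟨g₃ Λ, h3Λ⟩ : ℂ))
    (hN2 : g₂ N = (σ ⟨g₂ (idealMul τ 𝔞 (Λ : Set ℂ)), h2aΛ⟩ : ℂ))
    (hN3 : g₃ N = (σ ⟨g₃ (idealMul τ 𝔞 (Λ : Set ℂ)), h3aΛ⟩ : ℂ)) :
    N = AddSubgroup.closure
      {x : ℂ | ∃ a ∈ 𝔞, ∃ m ∈ M, ∃ h : τ a ∈ integralClosure ℚ ℂ,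
        x = (σ ⟨τ a, h⟩ : ℂ) * m} := by
  rw [closure_conjugate_mul_eq_idealMul]
  exact stmt_5_general (codRestrictAlgebraicClosure τ) (algebraMap _ ℂ) _
    ⟨hdiscΛ, hspanΛ⟩ ⟨hdiscM, hspanM⟩ ⟨hdiscN, hspanN⟩ (fun r ↦ hCM.ge ⟨r, rfl⟩) h𝔞
    ⟨⟨⟨_, h2Λ⟩, rfl, hM2⟩, ⟨⟨_, h3Λ⟩, rfl, hM3⟩⟩ ⟨⟨⟨_, h2aΛ⟩, rfl, hN2⟩, ⟨⟨_, h3aΛ⟩, rfl, hN3⟩⟩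
end

section
/- Let Γ ⊆ ℂ^g be an R-submodule of ℂ^g (under coordinatewise multiplication by elements of R) which is a ℤ-lattice in ℂ^g ≅ ℝ^{2g} (discrete and spanning over ℝ). Then there exists a positive definite hermitian matrix M ∈ M_g(ℂ) such that Im(∑_{i,j} γᵢ·M_{ij}·conj(γ'ⱼ)) ∈ ℤ for all γ, γ' ∈ Γ. (Every such Γ is a polarizable lattice.) -/
open NumberField
open scoped ComplexOrder

/-!
Let `α ∈ R` be non-real and let `e` be a `ℂ`-basis of `ℂ^g` contained in `Γ`. The vectors `e k` and
`α • e k` form an `ℝ`-basis of `ℂ^g` contained in `Γ`, so their `ℤ`-span has finite index in `Γ`,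
and for some `N ≠ 0` the coordinates of `N • γ` with respect to `e` lie in `ℤ + ℤ α` for every
`γ ∈ Γ`. Since `Im ((p + q α) * conj (p' + q' α)) = (q p' - p q') * Im α`, pulling the standard
hermitian form back along `N • e.repr` and dividing by `|Im α|` gives the required form.
-/

open Module Matrix

theorem exists_basis_forall_mem_of_span_eq_top {F V : Type*} [DivisionRing F] [AddCommGroup V]
    [Module F V] [FiniteDimensional F V] {s : Set V} (hs : Submodule.span F s = ⊤) :
    ∃ e : Basis (Fin (finrank F V)) F V, ∀ k, e k ∈ s := by
  let e := Basis.ofSpan hs.ge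
  refine ⟨e.reindex (e.indexEquiv (finBasis F V)), fun k ↦ ?_⟩
  rw [Basis.reindex_apply]
  exact Basis.ofSpan_subset hs.ge ⟨_, rfl⟩

section ZLattice

variable {E : Type*} [NormedAddCommGroup E] [NormedSpace ℝ E]

theorem exists_nsmul_mem_of_isZLattice_of_le [FiniteDimensional ℝ E] (L₁ L₂ : Submodule ℤ E)
    [DiscreteTopology L₁] [IsZLattice ℝ L₁] [DiscreteTopology L₂] [IsZLattice ℝ L₂]
    (hle : L₁ ≤ L₂) : ∃ N : ℕ, N ≠ 0 ∧ ∀ x ∈ L₂, N • x ∈ L₁ := by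
  have hrank : finrank ℤ (L₁.submoduleOf L₂) = finrank ℤ L₂ := by
    rw [(Submodule.submoduleOfEquivOfLe hle).finrank_eq, ZLattice.rank ℝ L₁, ZLattice.rank ℝ L₂]
  have : Finite (L₂ ⧸ L₁.submoduleOf L₂) := Submodule.finiteQuotientOfFreeOfRankEq _ hrank
  let index := (L₁.submoduleOf L₂).toAddSubgroup.index
  have hindex : index ≠ 0 := AddSubgroup.index_ne_zero_of_finite (hH := this)
  exact ⟨index, hindex, fun x hx ↦
    (L₁.submoduleOf L₂).toAddSubgroup.nsmul_index_mem ⟨x, hx⟩⟩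

theorem exists_nsmul_repr_mem_span {A κ ι : Type*} [Ring A] [Algebra ℝ A] [Module A E]
    [IsScalarTower ℝ A E] [Finite κ] [Finite ι] (c : Basis κ ℝ A) (e : Basis ι A E)
    (L : Submodule ℤ E) [DiscreteTopology L] [IsZLattice ℝ L] (hmem : ∀ j i, c j • e i ∈ L) :
    ∃ N : ℕ, N ≠ 0 ∧ ∀ x ∈ L, ∀ i, N • e.repr x i ∈ Submodule.span ℤ (Set.range c) := by
  have : FiniteDimensional ℝ E := (c.smulTower e).finiteDimensional_of_finite
  have hle : Submodule.span ℤ (Set.range (c.smulTower e)) ≤ L := by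
    rw [Submodule.span_le]
    rintro _ ⟨⟨j, i⟩, rfl⟩
    rw [Basis.smulTower_apply]
    exact hmem j i
  obtain ⟨N, hN, hNL⟩ := exists_nsmul_mem_of_isZLattice_of_le _ L hle
  refine ⟨N, hN, fun x hx i ↦ (c.mem_span_iff_repr_mem ℤ _).2 fun j ↦ ?_⟩
  have hcoord := ((c.smulTower e).mem_span_iff_repr_mem ℤ _).1 (hNL x hx) (j, i)
  simpa only [Basis.smulTower_repr_mk, map_nsmul, Finsupp.smul_apply] using hcoord

end ZLattice

theorem linearIndependent_one_of_im_ne_zero {α : ℂ} (hα : α.im ≠ 0) :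
    LinearIndependent ℝ ![1, α] :=
  (LinearIndependent.pair_iff' one_ne_zero).2 fun r h ↦ hα <| by simp [← h]

theorem im_mul_conj_mem_zmultiples {α z w : ℂ} (hz : z ∈ Submodule.span ℤ {1, α})
    (hw : w ∈ Submodule.span ℤ {1, α}) :
    (z * starRingEnd ℂ w).im ∈ AddSubgroup.zmultiples α.im := by
  obtain ⟨p, q, rfl⟩ := Submodule.mem_span_pair.1 hz
  obtain ⟨p', q', rfl⟩ := Submodule.mem_span_pair.1 hw
  refine AddSubgroup.mem_zmultiples_iff.2 ⟨q * p' - p * q', ?_⟩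
  simp only [zsmul_eq_mul, Int.cast_sub, Int.cast_mul, mul_one, map_add, map_intCast, map_mul,
    Complex.mul_im, Complex.mul_re, Complex.add_im, Complex.add_re, Complex.intCast_im,
    Complex.intCast_re, Complex.conj_im, Complex.conj_re]
  ring

theorem im_dotProduct_star_mem_zmultiples {κ : Type*} [Fintype κ] {α : ℂ} {v w : κ → ℂ}
    (hv : ∀ k, v k ∈ Submodule.span ℤ {1, α}) (hw : ∀ k, w k ∈ Submodule.span ℤ {1, α}) :
    (v ⬝ᵥ star w).im ∈ AddSubgroup.zmultiples α.im := by
  rw [dotProduct, Complex.im_sum]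
  exact sum_mem fun k _ ↦ im_mul_conj_mem_zmultiples (hv k) (hw k)

theorem exists_posDef_sum_mul_star_eq_dotProduct {𝕜 ι κ : Type*} [CommRing 𝕜] [PartialOrder 𝕜]
    [StarRing 𝕜] [StarOrderedRing 𝕜] [NoZeroDivisors 𝕜] [Fintype ι] [Fintype κ]
    (f : (ι → 𝕜) →ₗ[𝕜] κ → 𝕜) (hf : Function.Injective f) :
    ∃ M : Matrix ι ι 𝕜, M.PosDef ∧
      ∀ x y, ∑ i, ∑ j, x i * M i j * star (y j) = f x ⬝ᵥ star (f y) := by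
  classical
  let B : Matrix ι κ 𝕜 := (LinearMap.toMatrix' f)ᵀ
  have vecMul_B (x : ι → 𝕜) : x ᵥ* B = f x := by
    rw [vecMul_transpose, LinearMap.toMatrix'_mulVec]
  refine ⟨B * Bᴴ, .mul_conjTranspose_self B ?_, fun x y ↦ ?_⟩
  · rwa [funext vecMul_B]
  · calc ∑ i, ∑ j, x i * (B * Bᴴ) i j * star (y j)
        = x ⬝ᵥ (B * Bᴴ) *ᵥ star y := by
          simp only [dotProduct, mulVec, Finset.mul_sum, mul_assoc, Pi.star_apply]
      _ = x ᵥ* B ⬝ᵥ star (y ᵥ* B) := by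
          rw [star_vecMul, ← mulVec_mulVec, dotProduct_mulVec]
      _ = f x ⬝ᵥ star (f y) := by rw [vecMul_B, vecMul_B]

theorem exists_linearEquiv_forall_apply_mem_span_pair {E : Type*} [NormedAddCommGroup E]
    [NormedSpace ℂ E] [FiniteDimensional ℂ E] (L : Submodule ℤ E) [DiscreteTopology L]
    [IsZLattice ℝ L] {α : ℂ} (hα : α.im ≠ 0) (hmod : ∀ x ∈ L, α • x ∈ L) :
    ∃ f : E ≃ₗ[ℂ] (Fin (finrank ℂ E) → ℂ), ∀ x ∈ L, ∀ k, f x k ∈ Submodule.span ℤ {1, α} := by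
  have hspan : Submodule.span ℂ (L : Set E) = ⊤ := by
    rw [← Submodule.span_span_of_tower ℝ, IsZLattice.span_top, Submodule.top_coe,
      Submodule.span_univ]
  obtain ⟨e, he⟩ := exists_basis_forall_mem_of_span_eq_top hspan
  let c : Basis (Fin 2) ℝ ℂ :=
    basisOfLinearIndependentOfCardEqFinrank (linearIndependent_one_of_im_ne_zero hα) (by simp)
  have hc : ⇑c = ![1, α] := coe_basisOfLinearIndependentOfCardEqFinrank _ _
  obtain ⟨N, hN, hcoord⟩ := exists_nsmul_repr_mem_span c e L fun j k ↦ by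
    fin_cases j
    · simpa [hc] using he k
    · simpa [hc] using hmod _ (he k)
  rw [hc, range_cons_cons_empty] at hcoord
  refine ⟨.smulOfNeZero ℂ E N (by exact_mod_cast hN) ≪≫ₗ e.equivFun, fun x hx k ↦ ?_⟩
  simpa using hcoord x hx k

theorem exists_ringOfIntegers_im_ne_zero {K : Type*} [Field K] [NumberField K] {φ : K →+* ℂ}
    (hφ : ¬ ComplexEmbedding.IsReal φ) : ∃ a : 𝓞 K, (φ a).im ≠ 0 := by
  by_contra! him
  exact hφ <| ComplexEmbedding.isReal_iff.2 <|
    IsLocalization.ringHom_ext (nonZeroDivisors (𝓞 K)) <|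
      RingHom.ext fun a ↦ Complex.conj_eq_iff_im.2 (him a)

theorem stmt_9_general {ι : Type*} [Fintype ι] (Γ : Submodule ℤ (ι → ℂ)) [DiscreteTopology Γ]
    [IsZLattice ℝ Γ] {α : ℂ} (hα : α.im ≠ 0) (hmod : ∀ γ ∈ Γ, α • γ ∈ Γ) :
    ∃ M : Matrix ι ι ℂ, M.PosDef ∧
      ∀ γ ∈ Γ, ∀ γ' ∈ Γ,
        ∃ n : ℤ, (∑ i, ∑ j, γ i * M i j * starRingEnd ℂ (γ' j)).im = n := by
  obtain ⟨f, hf⟩ := exists_linearEquiv_forall_apply_mem_span_pair Γ hα hmod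
  obtain ⟨M, hM, hMf⟩ := exists_posDef_sum_mul_star_eq_dotProduct f.toLinearMap f.injective
  refine ⟨|α.im|⁻¹ • M, hM.smul (by positivity), fun γ hγ γ' hγ' ↦ ?_⟩
  have hform : (∑ i, ∑ j, γ i * (|α.im|⁻¹ • M) i j * starRingEnd ℂ (γ' j)).im =
      |α.im|⁻¹ * (f γ ⬝ᵥ star (f γ')).im := by
    rw [← smul_eq_mul, ← Complex.smul_im, ← LinearEquiv.coe_coe, ← hMf]
    simp only [Matrix.smul_apply, Finset.smul_sum, mul_smul_comm, smul_mul_assoc,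
      starRingEnd_apply]
  obtain ⟨n, hn⟩ := AddSubgroup.mem_zmultiples_iff.1 <|
    im_dotProduct_star_mem_zmultiples (hf γ hγ) (hf γ' hγ')
  rw [hform, ← hn, zsmul_eq_mul]
  rcases abs_choice α.im with habs | habs
  · exact ⟨n, by rw [habs]; field_simp⟩
  · exact ⟨-n, by rw [habs]; push_cast; field_simp⟩

/-- Every `R`-submodule `Γ` of `ℂ^g` (coordinatewise multiplication,
`R = τ(𝓞 K)`) which is a `ℤ`-lattice is polarizable: there is a positive definite hermitian
matrix `M` such that the associated hermitian form takes values with integral imaginary part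
on `Γ × Γ`. -/
theorem stmt_9
    (K : Type*) [Field K] [NumberField K]
    (hdeg : Module.finrank ℚ K = 2)
    (hcplx : IsEmpty (K →+* ℝ))
    (τ : K →+* ℂ)
    (g : ℕ)
    (Γ : AddSubgroup (Fin g → ℂ))
    (hmod : ∀ r ∈ Set.range (fun a : 𝓞 K => τ (algebraMap (𝓞 K) K a)),
      ∀ γ ∈ Γ, (fun i => r * γ i) ∈ Γ)
    (hdisc : DiscreteTopology Γ)
    (hspan : Submodule.span ℝ (Γ : Set (Fin g → ℂ)) = ⊤) :
    ∃ M : Matrix (Fin g) (Fin g) ℂ, M.PosDef ∧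
      ∀ γ ∈ Γ, ∀ γ' ∈ Γ,
        ∃ n : ℤ, (∑ i, ∑ j, γ i * M i j * starRingEnd ℂ (γ' j)).im = n := by
  obtain ⟨a, ha⟩ := exists_ringOfIntegers_im_ne_zero fun hτ ↦ hcplx.false hτ.embedding
  have : DiscreteTopology Γ.toIntSubmodule := hdisc
  have : IsZLattice ℝ Γ.toIntSubmodule := ⟨hspan⟩
  exact stmt_9_general Γ.toIntSubmodule ha (hmod _ ⟨a, rfl⟩)
end

section
/- Let σ be the nontrivial automorphism of K over ℚ (complex conjugation), acting coordinatewise on K^g and mapping 𝓞_K-submodules to 𝓞_K-submodules. Let L be a finitely generated 𝓞_K-submodule of K^g whose K-span is all of K^g. If σ(L) is isomorphic to L as an 𝓞_K-module, then L ⊕ L is a free 𝓞_K-module (equivalently, the Steinitz class of L has order at most 2 in the class group). -/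
open NumberField

/-!
Write `τ` for the restriction of `σ` to `𝓞 K`. Since every `x * τ x` is a rational integer,
polarization shows that every ideal `I` satisfies `I * τ(I) = (m)`, where `m` generates
`I * τ(I) ∩ ℤ`: for `x, y ∈ I` the conjugates `x * τ y / m` and `y * τ x / m` have integral sum and
product, so they are integral. Over a Dedekind domain, nonzero ideals with principal product have
a free direct sum, so `I ⊕ τ(I)` is free.

Now `L` is a direct sum of ideals `I_i`, and `σ(L) ≅ L` makes it also the direct sum of the
`τ(I_i)`. Hence `L ⊕ L ≅ ⨁ (I_i ⊕ τ(I_i))` is free.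
-/

theorem dvd_of_dvd_add_of_sq_dvd_mul {S : Type*} [CommRing S] [IsDomain S] [IsIntegrallyClosed S]
    {c u v : S} (hadd : c ∣ u + v) (hmul : c ^ 2 ∣ u * v) : c ∣ u := by
  obtain ⟨t, ht⟩ := hadd
  obtain ⟨n, hn⟩ := hmul
  have hquad : u ^ 2 - c * t * u + c ^ 2 * n = 0 := by linear_combination u * ht - hn
  rcases eq_or_ne c 0 with rfl | hc
  · simpa using hquad
  let φ := algebraMap S (FractionRing S)
  have hc' : φ c ≠ 0 := by simpa [φ] using hc
  have hint : IsIntegral S (φ u / φ c) := by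
    refine ⟨.X ^ 2 + (.C (-t) * .X + .C n), Polynomial.monic_X_pow_add <|
      Polynomial.degree_linear_le.trans_lt (by norm_num), ?_⟩
    have hquad' := congrArg φ hquad
    simp only [map_add, map_sub, map_mul, map_pow, map_zero] at hquad'
    simp only [Polynomial.eval₂_add, Polynomial.eval₂_mul, Polynomial.eval₂_pow,
      Polynomial.eval₂_X, Polynomial.eval₂_C, Polynomial.eval₂_neg, map_neg]
    field_simp
    linear_combination hquad'
  obtain ⟨y, hy⟩ := IsIntegrallyClosed.isIntegral_iff.1 hint
  refine ⟨y, IsFractionRing.injective S (FractionRing S) ?_⟩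
  rw [map_mul, hy, mul_div_cancel₀ _ hc']

theorem dvd_mul_apply_of_dvd_mul_apply_self {S T : Type*} [CommRing S] [IsDomain S]
    [IsIntegrallyClosed S] [FunLike T S S] [AddHomClass T S S] (τ : T) {c x y : S}
    (hx : c ∣ x * τ x) (hy : c ∣ y * τ y) (hxy : c ∣ (x + y) * τ (x + y)) : c ∣ x * τ y := by
  have hpolar : x * τ y + y * τ x = (x + y) * τ (x + y) - x * τ x - y * τ y := by
    rw [map_add]
    ring
  have hnorm : x * τ y * (y * τ x) = (x * τ x) * (y * τ y) := by ring
  apply dvd_of_dvd_add_of_sq_dvd_mul (v := y * τ x)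
  · exact hpolar ▸ (hxy.sub hx).sub hy
  · exact hnorm ▸ sq c ▸ mul_dvd_mul hx hy

theorem isPrincipal_mul_map_of_mul_apply_mem_range {R S : Type*} [CommRing R]
    [IsPrincipalIdealRing R] [CommRing S] [IsDomain S] [IsIntegrallyClosed S] [Algebra R S]
    {τ : S →+* S} (hτ : ∀ x, x * τ x ∈ (algebraMap R S).range) (I : Ideal S) :
    (I * I.map τ).IsPrincipal := by
  obtain ⟨m, hm : _ = Ideal.span {m}⟩ :=
    IsPrincipalIdealRing.principal ((I * I.map τ).comap (algebraMap R S))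
  have hmem : algebraMap R S m ∈ I * I.map τ :=
    Ideal.mem_comap.1 (hm ▸ Ideal.mem_span_singleton_self m)
  have dvd_self {x : S} (hx : x ∈ I) : algebraMap R S m ∣ x * τ x := by
    obtain ⟨r, hr⟩ := hτ x
    have hr_mem : r ∈ (I * I.map τ).comap (algebraMap R S) :=
      Ideal.mem_comap.2 (hr ▸ Ideal.mul_mem_mul hx (Ideal.mem_map_of_mem τ hx))
    exact hr ▸ map_dvd _ (Ideal.mem_span_singleton.1 (hm ▸ hr_mem))
  refine ⟨algebraMap R S m, le_antisymm ?_ ((Ideal.span_singleton_le_iff_mem _).2 hmem)⟩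
  conv_lhs => rw [← Ideal.span_eq I, Ideal.map_span, Ideal.span_mul_span']
  rw [Ideal.submodule_span_eq, Ideal.span_le]
  rintro _ ⟨x, hx, _, ⟨y, hy, rfl⟩, rfl⟩
  exact Ideal.mem_span_singleton.2 <| dvd_mul_apply_of_dvd_mul_apply_self τ
    (dvd_self hx) (dvd_self hy) (dvd_self (I.add_mem hx hy))

theorem mem_span_pair_mul {R : Type*} [CommRing R] {J : Ideal R} {a b n : R} :
    n ∈ Ideal.span {a, b} * J ↔ ∃ c ∈ J, ∃ d ∈ J, a * c + b * d = n := by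
  rw [Ideal.span_insert, Ideal.sup_mul, Submodule.mem_sup]
  simp only [Ideal.mem_span_singleton_mul, exists_exists_and_eq_and]

theorem nonempty_linearEquiv_prod_of_span_pair_mul_eq {R : Type*} [CommRing R] {J : Ideal R}
    {a b n : R} (hn : IsLeftRegular n) (hmul : Ideal.span {a, b} * J = Ideal.span {n}) :
    Nonempty ((R × R) ≃ₗ[R] (Ideal.span {a, b} × J)) := by
  set I := Ideal.span {a, b}
  have ha : a ∈ I := Ideal.subset_span (by simp)
  have hb : b ∈ I := Ideal.subset_span (by simp)
  have dvd_mul {i j : R} (hi : i ∈ I) (hj : j ∈ J) : n ∣ i * j :=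
    Ideal.mem_span_singleton.1 (hmul ▸ Ideal.mul_mem_mul hi hj)
  obtain ⟨c, hc, d, hd, hdet⟩ := mem_span_pair_mul.1 (hmul ▸ Ideal.mem_span_singleton_self n)
  -- The matrix `!![a, b; -d, c]` has determinant `n`, and its adjugate maps `I × J` to `n(R × R)`.
  let f : (R × R) →ₗ[R] (I × J) :=
    ((LinearMap.toSpanSingleton R I ⟨a, ha⟩).coprod
      (LinearMap.toSpanSingleton R I ⟨b, hb⟩)).prod
    ((LinearMap.toSpanSingleton R J (-⟨d, hd⟩)).coprod
      (LinearMap.toSpanSingleton R J ⟨c, hc⟩))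
  have hf₁ (x y : R) : ((f (x, y)).1 : R) = x * a + y * b := rfl
  have hf₂ (x y : R) : ((f (x, y)).2 : R) = x * -d + y * c := rfl
  refine ⟨LinearEquiv.ofBijective f ⟨(injective_iff_map_eq_zero f).2 ?_, ?_⟩⟩
  · rintro ⟨x, y⟩ hxy
    have h₁ : x * a + y * b = 0 := by rw [← hf₁, hxy]; rfl
    have h₂ : x * -d + y * c = 0 := by rw [← hf₂, hxy]; rfl
    have hx : n * x = 0 := by linear_combination c * h₁ - b * h₂ - x * hdet
    have hy : n * y = 0 := by linear_combination d * h₁ + a * h₂ - y * hdet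
    exact Prod.ext (hn.mul_left_eq_zero_iff.1 hx) (hn.mul_left_eq_zero_iff.1 hy)
  · rintro ⟨⟨i, hi⟩, ⟨j, hj⟩⟩
    obtain ⟨x, hx⟩ : n ∣ i * c - b * j := (dvd_mul hi hc).sub (dvd_mul hb hj)
    obtain ⟨y, hy⟩ : n ∣ i * d + a * j := (dvd_mul hi hd).add (dvd_mul ha hj)
    refine ⟨(x, y), Prod.ext (Subtype.ext (hn ?_)) (Subtype.ext (hn ?_))⟩
    · linear_combination n * hf₁ x y + i * hdet - a * hx - b * hy
    · linear_combination n * hf₂ x y + j * hdet + d * hx - c * hy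

theorem free_prod_of_isPrincipal_mul {R : Type*} [CommRing R] [IsDedekindDomain R] {I J : Ideal R}
    (hI : I ≠ ⊥) (hJ : J ≠ ⊥) (hIJ : (I * J).IsPrincipal) : Module.Free R (I × J) := by
  obtain ⟨n, hn⟩ := hIJ
  have hn0 : n ≠ 0 := by
    rintro rfl
    exact mul_ne_zero hI hJ (by simpa using hn)
  obtain ⟨a, ha, ha0⟩ := Submodule.exists_mem_ne_zero_of_ne_bot hI
  obtain ⟨b, rfl⟩ := IsDedekindDomain.exists_eq_span_pair ha ha0
  obtain ⟨e⟩ := nonempty_linearEquiv_prod_of_span_pair_mul_eq (IsRegular.of_ne_zero hn0).left hn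
  exact .of_equiv e

theorem nonempty_linearEquiv_ker_prod_range {R M N : Type*} [Ring R] [AddCommGroup M] [Module R M]
    [AddCommGroup N] [Module R N] (f : M →ₗ[R] N) [Module.Projective R (LinearMap.range f)] :
    Nonempty (M ≃ₗ[R] LinearMap.ker f × LinearMap.range f) := by
  obtain ⟨s, hs⟩ := LinearMap.exists_rightInverse_of_surjective f.rangeRestrict
    (LinearMap.range_rangeRestrict f)
  have hexact : Function.Exact (LinearMap.ker f).subtype f.rangeRestrict := by
    rw [LinearMap.exact_iff, LinearMap.ker_rangeRestrict, Submodule.range_subtype]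
  exact ⟨(hexact.splitSurjectiveEquiv (Submodule.injective_subtype _) ⟨s, hs⟩).1⟩

theorem exists_linearEquiv_pi_ideal_of_injective {R : Type*} [CommRing R]
    (hproj : ∀ I : Ideal R, Module.Projective R I) {M : Type*} [AddCommGroup M] [Module R M]
    {n : ℕ} (f : M →ₗ[R] (Fin n → R)) (hf : Function.Injective f) :
    ∃ I : Fin n → Ideal R, Nonempty (M ≃ₗ[R] (∀ i, I i)) := by
  induction n generalizing M with
  | zero =>
    have := hf.subsingleton
    exact ⟨fun _ => ⊥, ⟨0⟩⟩
  | succ n ih =>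
    let head : M →ₗ[R] R := LinearMap.proj 0 ∘ₗ f
    let tail : LinearMap.ker head →ₗ[R] (Fin n → R) :=
      LinearMap.funLeft R R Fin.succ ∘ₗ f ∘ₗ (LinearMap.ker head).subtype
    have htail : Function.Injective tail := by
      refine (injective_iff_map_eq_zero tail).2 fun ⟨x, hx⟩ hx' => Subtype.ext (hf ?_)
      rw [ZeroMemClass.coe_zero, map_zero]
      exact funext (Fin.cases hx fun i => congrFun hx' i)
    obtain ⟨I, ⟨e⟩⟩ := ih tail htail
    have : Module.Projective R (LinearMap.range head) := hproj _
    obtain ⟨split⟩ := nonempty_linearEquiv_ker_prod_range head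
    let J : Fin (n + 1) → Ideal R := Fin.cons (LinearMap.range head) I
    exact ⟨J, ⟨split ≪≫ₗ LinearEquiv.prodComm R _ _ ≪≫ₗ
      (LinearEquiv.refl R _).prodCongr e ≪≫ₗ Fin.consLinearEquiv R fun i => J i⟩⟩

theorem projective_of_finite_of_isTorsionFree (R M : Type*) [CommRing R] [IsDedekindDomain R]
    [AddCommGroup M] [Module R M] [Module.Finite R M] [Module.IsTorsionFree R M] :
    Module.Projective R M :=
  have : Module.FinitePresentation R M := Module.finitePresentation_of_finite R M
  Module.Flat.projective_of_finitePresentation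

theorem exists_linearEquiv_pi_ideal (R M : Type*) [CommRing R] [IsDedekindDomain R]
    [AddCommGroup M] [Module R M] [Module.Finite R M] [Module.IsTorsionFree R M] :
    ∃ (n : ℕ) (I : Fin n → Ideal R), Nonempty (M ≃ₗ[R] (∀ i, I i)) := by
  have := projective_of_finite_of_isTorsionFree R M
  obtain ⟨n, -, f, -, hf, -⟩ := Module.Finite.exists_comp_eq_id_of_projective R M
  exact ⟨n, exists_linearEquiv_pi_ideal_of_injective
    (fun I => projective_of_finite_of_isTorsionFree R I) f hf⟩

/-- The semilinear equivalence of product modules obtained from a family of semilinear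
equivalences of the factors, generalizing `LinearEquiv.piCongrRight`. -/
def semilinearEquivPiCongrRight {R S ι : Type*} [Semiring R] [Semiring S] {τ : R →+* S}
    {τ' : S →+* R} [RingHomInvPair τ τ'] [RingHomInvPair τ' τ] {φ ψ : ι → Type*}
    [∀ i, AddCommMonoid (φ i)] [∀ i, Module R (φ i)] [∀ i, AddCommMonoid (ψ i)]
    [∀ i, Module S (ψ i)] (e : ∀ i, φ i ≃ₛₗ[τ] ψ i) : (∀ i, φ i) ≃ₛₗ[τ] (∀ i, ψ i) where
  __ := AddEquiv.piCongrRight fun i => (e i).toAddEquiv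
  map_smul' r v := funext fun i => map_smulₛₗ (e i) r (v i)

section RingEquiv

attribute [local instance] RingHomInvPair.of_ringEquiv RingHomInvPair.of_ringEquiv_symm

/-- The restriction of a ring isomorphism `τ` to an ideal `I`, as a `τ`-semilinear equivalence of
`I` with its image `τ(I)`. -/
noncomputable def idealMapSemilinearEquiv {R S : Type*} [CommRing R] [CommRing S] (τ : R ≃+* S)
    (I : Ideal R) : I ≃ₛₗ[(τ : R →+* S)] I.map (τ : R →+* S) :=
  (Submodule.equivMapOfInjective (τ : R →+* S).toSemilinearMap τ.injective I).trans
    (LinearEquiv.ofEq _ _ (Ideal.map_eq_submodule_map (τ : R →+* S) I).symm)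

section PrincipalNorms

variable {R S : Type*} [CommRing R] [IsPrincipalIdealRing R] [CommRing S] [IsDedekindDomain S]
  [Algebra R S]

theorem free_prod_map_of_mul_apply_mem_range {τ : S →+* S} (hinj : Function.Injective τ)
    (hτ : ∀ x, x * τ x ∈ (algebraMap R S).range) (I : Ideal S) :
    Module.Free S (I × I.map τ) := by
  rcases eq_or_ne I ⊥ with rfl | hI
  · rw [Ideal.map_bot]
    infer_instance
  · exact free_prod_of_isPrincipal_mul hI ((Ideal.map_eq_bot_iff_of_injective hinj).not.2 hI)
      (isPrincipal_mul_map_of_mul_apply_mem_range hτ I)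

theorem free_prod_self_of_semilinearEquiv {M : Type*} [AddCommGroup M] [Module S M]
    [Module.Finite S M] [Module.IsTorsionFree S M] {τ : S ≃+* S}
    (hτ : ∀ x, x * τ x ∈ (algebraMap R S).range) (e : M ≃ₛₗ[(τ : S →+* S)] M) :
    Module.Free S (M × M) := by
  obtain ⟨n, I, ⟨f⟩⟩ := exists_linearEquiv_pi_ideal S M
  -- Going back along `e` and forth along `τ` is linear.
  let f' : M ≃ₗ[S] ∀ i, (I i).map (τ : S →+* S) :=
    e.symm.trans (f.trans (semilinearEquivPiCongrRight fun i => idealMapSemilinearEquiv τ (I i)))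
  let pairs : (∀ i, I i × (I i).map (τ : S →+* S)) ≃ₗ[S]
      (∀ i, I i) × ∀ i, (I i).map (τ : S →+* S) :=
    { Equiv.arrowProdEquivProdArrow _ _ _ with
      map_add' := fun _ _ => rfl
      map_smul' := fun _ _ => rfl }
  have hfree (i : Fin n) : Module.Free S (I i × (I i).map (τ : S →+* S)) :=
    free_prod_map_of_mul_apply_mem_range τ.injective hτ (I i)
  exact .of_equiv (pairs ≪≫ₗ (f.prodCongr f').symm)

end PrincipalNorms

theorem mul_algEquiv_apply_eq_algebraMap_norm {F K : Type*} [Field F] [Field K] [Algebra F K]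
    [Algebra.IsQuadraticExtension F K] [IsGalois F K] {σ : K ≃ₐ[F] K} (hσ : σ ≠ AlgEquiv.refl)
    (x : K) : x * σ x = algebraMap F K (Algebra.norm F x) := by
  classical
  have huniv : {AlgEquiv.refl, σ} = (Finset.univ : Finset (K ≃ₐ[F] K)) := by
    rw [← Finset.card_eq_iff_eq_univ, Finset.card_pair hσ.symm, ← Nat.card_eq_fintype_card,
      IsGalois.card_aut_eq_finrank, Algebra.IsQuadraticExtension.finrank_eq_two]
  rw [Algebra.norm_eq_prod_automorphisms, ← huniv, Finset.prod_pair hσ.symm, AlgEquiv.coe_refl, id]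

/-- A field isomorphism `σ`, as an equivalence semilinear over its restriction to the rings of
integers. -/
def ringOfIntegersSemilinearEquiv {K K' : Type*} [Field K] [Field K'] (σ : K ≃+* K') :
    K ≃ₛₗ[(RingOfIntegers.mapRingEquiv σ : 𝓞 K →+* 𝓞 K')] K' where
  __ := σ.toAddEquiv
  map_smul' r x := by simp [Algebra.smul_def]

section QuadraticField

variable {K : Type*} [Field K] [NumberField K]

theorem mul_mapRingEquiv_mem_range_algebraMap_int (hdeg : Module.finrank ℚ K = 2)
    {σ : K ≃ₐ[ℚ] K} (hσ : σ ≠ AlgEquiv.refl) (x : 𝓞 K) :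
    x * RingOfIntegers.mapRingEquiv σ.toRingEquiv x ∈ (algebraMap ℤ (𝓞 K)).range := by
  have : Algebra.IsQuadraticExtension ℚ K := ⟨hdeg⟩
  have hnorm := mul_algEquiv_apply_eq_algebraMap_norm hσ (x : K)
  rw [← Algebra.coe_norm_int] at hnorm
  exact ⟨Algebra.norm ℤ x, RingOfIntegers.coe_injective (by simpa using hnorm.symm)⟩

theorem stmt_13_general (hdeg : Module.finrank ℚ K = 2) {σ : K ≃ₐ[ℚ] K}
    (hσ : σ ≠ AlgEquiv.refl) {ι : Type*} {L : Submodule (𝓞 K) (ι → K)} (hfg : L.FG)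
    (hiso : Nonempty
      ((Submodule.span (𝓞 K) {v : ι → K | ∃ w ∈ L, v = fun i => σ (w i)}) ≃ₗ[𝓞 K] L)) :
    Module.Free (𝓞 K) (L × L) := by
  obtain ⟨e⟩ := hiso
  let conj := semilinearEquivPiCongrRight fun _ : ι => ringOfIntegersSemilinearEquiv σ.toRingEquiv
  have hspan : L.map conj.toLinearMap =
      Submodule.span (𝓞 K) {v : ι → K | ∃ w ∈ L, v = fun i => σ (w i)} := by
    rw [← Submodule.span_eq (L.map conj.toLinearMap)]
    congr 1
    ext v
    exact exists_congr fun w => and_congr_right fun _ => eq_comm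
  have : Module.Finite (𝓞 K) L := .of_fg hfg
  exact free_prod_self_of_semilinearEquiv (mul_mapRingEquiv_mem_range_algebraMap_int hdeg hσ)
    ((conj.submoduleMap L).trans ((LinearEquiv.ofEq _ _ hspan).trans e))

end QuadraticField

end RingEquiv

/-- Let `K` be an imaginary quadratic field, `σ` the nontrivial automorphism
of `K/ℚ` (complex conjugation), and `L` a finitely generated `𝓞 K`-submodule of `K^g` with
full `K`-span.  If `σ(L) ≅ L` as `𝓞 K`-modules, then `L ⊕ L` is a free `𝓞 K`-module
(the Steinitz class of `L` has order at most `2`). -/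
theorem stmt_13
    (K : Type*) [Field K] [NumberField K]
    (hdeg : Module.finrank ℚ K = 2)
    (hcplx : IsEmpty (K →+* ℝ))
    (σ : K ≃ₐ[ℚ] K) (hσ : σ ≠ AlgEquiv.refl)
    (g : ℕ) (hg : 1 ≤ g)
    (L : Submodule (𝓞 K) (Fin g → K))
    (hfg : L.FG)
    (hspan : Submodule.span K (L : Set (Fin g → K)) = ⊤)
    (hiso : Nonempty
      ((Submodule.span (𝓞 K) {v : Fin g → K | ∃ w ∈ L, v = fun i => σ (w i)}) ≃ₗ[𝓞 K] L)) :
    Module.Free (𝓞 K) (↥L × ↥L) :=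
  stmt_13_general hdeg hσ hfg hiso
end
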